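/- arXiv:2002.12202 — 11 statements merged into one kernel-verified Lean document; each statement's English description precedes it below -/
import Mathlib

section
/- Let d, n, m ≥ 1 be integers, let a_1,…,a_d ∈ ℂ be pairwise distinct, let b_1,…,b_d ∈ ℂ be pairwise distinct, and set P(z) = ∏_{i=1}^d (z − a_i) and Q(z) = ∏_{i=1}^d (z − b_i). Let f, g ∈ ℂ[z] satisfy f(b_i) = a_i for all i and f^{(k)}(b_i) = 0 for all i and all 1 ≤ k ≤ n−1, and g(a_i) = b_i for all i and g^{(k)}(a_i) = 0 for all i and all 1 ≤ k ≤ m−1. Set A = ℂ[X,Y,Z,W]/(X^n Y − P(Z)) and B = ℂ[X,Y,Z,W]/(X^m Y − Q(Z)). Then there exist mutually inverse ℂ-algebra isomorphisms Φ : B → A and Ψ : A → B such that, writing x̄, ȳ, z̄, w̄ for the residue classes of X, Y, Z, W in each ring: Φ(x̄) = x̄, Φ(z̄) = g(z̄) + x̄^m w̄, x̄^m · Φ(ȳ) = Q(g(z̄) + x̄^m w̄), and x̄^n · Φ(w̄) = z̄ − f(g(z̄) + x̄^m w̄) hold in A; and Ψ(x̄) = x̄, Ψ(z̄) = f(z̄)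 + x̄^n w̄, x̄^n · Ψ(ȳ) = P(f(z̄) + x̄^n w̄), and x̄^m · Ψ(w̄) = z̄ − g(f(z̄) + x̄^n w̄) hold in B. -/
open MvPolynomial

/-- The coordinate ring `ℂ[X,Y,Z,W]/(X^k Y - P(Z))` of the cylinder over the classical
Danielewski surface `x^k y = P(z)`.  Variables: `X 0 = X`, `X 1 = Y`, `X 2 = Z`, `X 3 = W`. -/
abbrev CylRing (k : ℕ) (P : Polynomial ℂ) : Type :=
  MvPolynomial (Fin 4) ℂ ⧸
    Ideal.span {(X 0 : MvPolynomial (Fin 4) ℂ) ^ k * X 1 - Polynomial.aeval (X 2) P}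

/-- The canonical projection onto the coordinate ring of the cylinder. -/
noncomputable abbrev cylMk (k : ℕ) (P : Polynomial ℂ) :
    MvPolynomial (Fin 4) ℂ →+* CylRing k P :=
  Ideal.Quotient.mk _

/-- A polynomial whose value at `b` is `a` and whose derivatives of orders `1, …, n - 1` vanish
at `b` is congruent to `a` modulo `(X - b)^n`. -/
lemma X_sub_C_pow_dvd_sub_C {K : Type*} [Field K] [CharZero K] {n : ℕ} {f : Polynomial K}
    {a b : K} (h0 : f.eval b = a)
    (h1 : ∀ k, 1 ≤ k → k ≤ n - 1 → (Polynomial.derivative^[k] f).eval b = 0) :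
    (Polynomial.X - Polynomial.C b) ^ n ∣ f - Polynomial.C a := by
  rcases eq_or_ne (f - Polynomial.C a) 0 with h | h
  · simp [h]
  rcases n with _ | n
  · simp
  refine (Polynomial.le_rootMultiplicity_iff h).1
    (Polynomial.lt_rootMultiplicity_of_isRoot_iterate_derivative h fun k hk => ?_)
  rcases k with _ | k
  · simp [h0]
  · have hk := h1 (k + 1) (by omega) (by omega)
    rw [Function.iterate_succ_apply] at hk ⊢
    simpa using hk

/-- If the values at `z` of the polynomials `(∏ j ≠ i, (X - a j))^N`, which generate the unit
ideal, all multiply `r` into the multiples of `c`, then `c` divides `r`. -/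
lemma dvd_of_dvd_aeval_prod_erase_pow_mul {K R ι : Type*} [Field K] [CommRing R] [Algebra K R]
    [Fintype ι] [DecidableEq ι] [Nonempty ι] {a : ι → K} (ha : Function.Injective a) (N : ℕ)
    {z c r : R}
    (h : ∀ i, c ∣ Polynomial.aeval z
      (∏ j ∈ Finset.univ.erase i, (Polynomial.X - Polynomial.C (a j))) ^ N * r) :
    c ∣ r := by
  obtain ⟨μ, hμ⟩ := (exists_sum_eq_one_iff_pairwise_coprime
    (s := fun i => (Polynomial.X - Polynomial.C (a i)) ^ N)
    (Finset.univ_nonempty (α := ι))).2 fun i j hij =>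
      (Polynomial.pairwise_coprime_X_sub_C ha (Subtype.coe_injective.ne hij)).pow
  have key := congrArg (fun p => Polynomial.aeval z p * r) hμ
  simp only [map_sum, map_one, one_mul, Finset.sum_mul, map_mul] at key
  rw [← key]
  refine Finset.dvd_sum fun i _ => ?_
  rw [mul_assoc, ← Finset.erase_eq, Finset.prod_pow, map_pow]
  exact (h i).mul_left _

section Divisibility

variable {K R ι : Type*} [Field K] [CommRing R] [Algebra K R] [Fintype ι] [DecidableEq ι]
  {n m : ℕ} {a b : ι → K} {f g : Polynomial K} {x y z w : R}

/-- The relation `x^n y = P(z)` after splitting off one linear factor of `P`. -/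
lemma aeval_prod_erase_mul_sub
    (hz : x ^ n * y = Polynomial.aeval z (∏ i, (Polynomial.X - Polynomial.C (a i)))) (i : ι) :
    Polynomial.aeval z (∏ j ∈ Finset.univ.erase i, (Polynomial.X - Polynomial.C (a j))) *
      (z - algebraMap K R (a i)) = x ^ n * y := by
  rw [hz, ← Finset.prod_erase_mul _ _ (Finset.mem_univ i)]
  simp

variable [Nonempty ι]

/-- On `x^n y = ∏ (z - a i)`, if `g` is congruent to `b i` modulo `(X - a i)^m`, then `x^m`
divides the value of `∏ (X - b i)` at `g(z) + x^m w`. -/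
lemma pow_dvd_aeval_prod (hn : 1 ≤ n) (ha : Function.Injective a)
    (hz : x ^ n * y = Polynomial.aeval z (∏ i, (Polynomial.X - Polynomial.C (a i))))
    (hg : ∀ i, (Polynomial.X - Polynomial.C (a i)) ^ m ∣ g - Polynomial.C (b i)) :
    x ^ m ∣ Polynomial.aeval (Polynomial.aeval z g + x ^ m * w)
      (∏ i, (Polynomial.X - Polynomial.C (b i))) := by
  refine dvd_of_dvd_aeval_prod_erase_pow_mul (z := z) ha m fun i => ?_
  have hE := aeval_prod_erase_mul_sub hz i
  obtain ⟨u, hu⟩ := hg i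
  have hu := congrArg (Polynomial.aeval z) hu
  simp only [map_sub, map_mul, map_pow, Polynomial.aeval_X, Polynomial.aeval_C] at hu
  rw [← Finset.mul_prod_erase _ _ (Finset.mem_univ i), map_mul, ← mul_assoc]
  refine Dvd.dvd.mul_right ?_ _
  rw [map_sub, Polynomial.aeval_X, Polynomial.aeval_C, add_sub_right_comm, hu, mul_add]
  refine dvd_add ?_ ((dvd_mul_right _ _).mul_left _)
  rw [← mul_assoc, ← mul_pow, hE]
  exact (pow_dvd_pow_of_dvd ((dvd_pow_self x (by omega)).mul_right y) m).mul_right _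

/-- On `x^n y = ∏ (z - a i)`, if `g` is congruent to `b i` modulo `(X - a i)^m` and `f` is
congruent to `a i` modulo `(X - b i)^n`, then `f(g(z) + x^m w)` is congruent to `z`
modulo `x^n`. -/
lemma pow_dvd_sub_aeval (hn : 1 ≤ n) (hm : 1 ≤ m) (ha : Function.Injective a)
    (hz : x ^ n * y = Polynomial.aeval z (∏ i, (Polynomial.X - Polynomial.C (a i))))
    (hf : ∀ i, (Polynomial.X - Polynomial.C (b i)) ^ n ∣ f - Polynomial.C (a i))
    (hg : ∀ i, (Polynomial.X - Polynomial.C (a i)) ^ m ∣ g - Polynomial.C (b i)) :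
    x ^ n ∣ z - Polynomial.aeval (Polynomial.aeval z g + x ^ m * w) f := by
  refine dvd_of_dvd_aeval_prod_erase_pow_mul (z := z) ha n fun i => ?_
  have hE := aeval_prod_erase_mul_sub hz i
  set e := Polynomial.aeval z
    (∏ j ∈ Finset.univ.erase i, (Polynomial.X - Polynomial.C (a j)))
  set t := Polynomial.aeval z g + x ^ m * w with ht
  obtain ⟨u, hu⟩ := (dvd_pow_self _ (by omega)).trans (hg i)
  have hu := congrArg (Polynomial.aeval z) hu
  obtain ⟨v, hv⟩ := hf i
  have hv := congrArg (Polynomial.aeval t) hv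
  simp only [map_sub, map_mul, map_pow, Polynomial.aeval_X, Polynomial.aeval_C] at hu hv
  rw [← sub_sub_sub_cancel_right _ _ (algebraMap K R (a i)), hv, mul_sub]
  refine dvd_sub ?_ ?_
  · obtain ⟨n, rfl⟩ := Nat.exists_eq_add_of_le' hn
    rw [pow_succ e, mul_assoc, hE]
    exact (dvd_mul_right _ _).mul_left _
  · rw [← mul_assoc, ← mul_pow]
    refine Dvd.dvd.mul_right (pow_dvd_pow_of_dvd ?_ n) _
    rw [ht, add_sub_right_comm, hu, mul_add, ← mul_assoc, hE]
    exact dvd_add (((dvd_pow_self x (by omega)).mul_right y).mul_right _)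
      (((dvd_pow_self x (by omega)).mul_right w).mul_left _)

end Divisibility

/-- The defining relation of the coordinate ring of the cylinder. -/
lemma cylMk_relation (k : ℕ) (P : Polynomial ℂ) :
    cylMk k P (X 0) ^ k * cylMk k P (X 1) = Polynomial.aeval (cylMk k P (X 2)) P := by
  have h : cylMk k P (X 0 ^ k * X 1 - Polynomial.aeval (X 2) P) = 0 :=
    Ideal.Quotient.eq_zero_iff_mem.2 (Ideal.subset_span rfl)
  rw [map_sub, map_mul, map_pow, sub_eq_zero] at h
  rw [h]
  exact (Polynomial.aeval_algHom_apply (F := MvPolynomial (Fin 4) ℂ →ₐ[ℂ] CylRing k P)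
    (Ideal.Quotient.mkₐ ℂ _) (X 2) P).symm

/-- The class of `X` is a non-zero-divisor in the coordinate ring of the cylinder. -/
lemma isLeftRegular_cylMk_X {k : ℕ} (hk : 1 ≤ k) {P : Polynomial ℂ} (hP : P ≠ 0) :
    IsLeftRegular (cylMk k P (X 0)) := by
  refine isLeftRegular_iff_right_eq_zero_of_mul.2 fun r hr => ?_
  obtain ⟨u, rfl⟩ := Ideal.Quotient.mk_surjective r
  rw [← map_mul, Ideal.Quotient.eq_zero_iff_mem, Ideal.mem_span_singleton] at hr
  obtain ⟨v, hv⟩ := hr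
  have hX : ¬ (X 0 : MvPolynomial (Fin 4) ℂ) ∣ X 0 ^ k * X 1 - Polynomial.aeval (X 2) P := by
    intro h
    rw [dvd_sub_right ((dvd_pow_self _ (by omega)).mul_right _)] at h
    have h := map_dvd (aeval ![0, 0, Polynomial.X, 0] :
      MvPolynomial (Fin 4) ℂ →ₐ[ℂ] Polynomial ℂ) h
    rw [← Polynomial.aeval_algHom_apply] at h
    simp [hP] at h
  obtain ⟨v', rfl⟩ := (X_prime.dvd_or_dvd (Dvd.intro u hv)).resolve_left hX
  rw [Ideal.Quotient.eq_zero_iff_mem, Ideal.mem_span_singleton]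
  refine ⟨v', mul_left_cancel₀ X_prime.ne_zero (hv.trans ?_)⟩
  ring

/-- The conditions that determine the homomorphism from the cylinder ring of `x^m y = Q(z)` to
that of `x^n y = P(z)` attached to the polynomials `f` and `g`. -/
structure IsCylTransition (n m : ℕ) (P Q f g : Polynomial ℂ)
    (φ : CylRing m Q →ₐ[ℂ] CylRing n P) : Prop where
  map_x : φ (cylMk m Q (X 0)) = cylMk n P (X 0)
  map_z : φ (cylMk m Q (X 2)) =
    Polynomial.aeval (cylMk n P (X 2)) g + (cylMk n P (X 0)) ^ m * cylMk n P (X 3)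
  map_y : (cylMk n P (X 0)) ^ m * φ (cylMk m Q (X 1)) =
    Polynomial.aeval
      (Polynomial.aeval (cylMk n P (X 2)) g + (cylMk n P (X 0)) ^ m * cylMk n P (X 3)) Q
  map_w : (cylMk n P (X 0)) ^ n * φ (cylMk m Q (X 3)) =
    cylMk n P (X 2) - Polynomial.aeval
      (Polynomial.aeval (cylMk n P (X 2)) g + (cylMk n P (X 0)) ^ m * cylMk n P (X 3)) f

/-- The transition homomorphism exists when `f` and `g` interpolate the roots to the orders `n`
and `m`. -/
lemma exists_isCylTransition {ι : Type*} [Fintype ι] [DecidableEq ι] [Nonempty ι] {n m : ℕ}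
    (hn : 1 ≤ n) (hm : 1 ≤ m) {a b : ι → ℂ} (ha : Function.Injective a) {P Q f g : Polynomial ℂ}
    (hP : P = ∏ i, (Polynomial.X - Polynomial.C (a i)))
    (hQ : Q = ∏ i, (Polynomial.X - Polynomial.C (b i)))
    (hf : ∀ i, (Polynomial.X - Polynomial.C (b i)) ^ n ∣ f - Polynomial.C (a i))
    (hg : ∀ i, (Polynomial.X - Polynomial.C (a i)) ^ m ∣ g - Polynomial.C (b i)) :
    ∃ φ : CylRing m Q →ₐ[ℂ] CylRing n P, IsCylTransition n m P Q f g φ := by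
  have hz := (cylMk_relation n P).trans (congrArg (Polynomial.aeval _) hP)
  obtain ⟨y', hy⟩ := pow_dvd_aeval_prod (w := cylMk n P (X 3)) hn ha hz hg
  obtain ⟨w', hw⟩ := pow_dvd_sub_aeval (w := cylMk n P (X 3)) hn hm ha hz hf hg
  rw [← hQ] at hy
  set t := Polynomial.aeval (cylMk n P (X 2)) g + (cylMk n P (X 0)) ^ m * cylMk n P (X 3)
  let ψ : MvPolynomial (Fin 4) ℂ →ₐ[ℂ] CylRing n P := aeval ![cylMk n P (X 0), y', t, w']
  have hψ : ∀ p ∈ Ideal.span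
      {(X 0 : MvPolynomial (Fin 4) ℂ) ^ m * X 1 - Polynomial.aeval (X 2) Q}, ψ p = 0 := by
    intro p hp
    obtain ⟨q, rfl⟩ := Ideal.mem_span_singleton.1 hp
    rw [map_mul, map_sub, ← Polynomial.aeval_algHom_apply]
    simp [ψ, hy]
  have hlift : ∀ p, Ideal.Quotient.liftₐ _ ψ hψ (cylMk m Q p) = ψ p := fun _ => rfl
  refine ⟨Ideal.Quotient.liftₐ _ ψ hψ, ?_, ?_, ?_, ?_⟩ <;> rw [hlift]
  · simp [ψ]
  · simp [ψ, t]
  · simpa [ψ] using hy.symm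
  · simpa [ψ] using hw.symm

/-- Transition homomorphisms in opposite directions are inverse to each other. -/
lemma IsCylTransition.comp_eq_id {n m : ℕ} {P Q f g : Polynomial ℂ} (hm : 1 ≤ m) (hQ : Q ≠ 0)
    {φ : CylRing m Q →ₐ[ℂ] CylRing n P} {ψ : CylRing n P →ₐ[ℂ] CylRing m Q}
    (hφ : IsCylTransition n m P Q f g φ) (hψ : IsCylTransition m n Q P g f ψ) :
    ψ.comp φ = AlgHom.id ℂ (CylRing m Q) := by
  have hreg (k : ℕ) := (isLeftRegular_cylMk_X hm hQ).pow k
  have hz : ψ (φ (cylMk m Q (X 2))) = cylMk m Q (X 2) := by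
    rw [hφ.map_z, map_add, map_mul, map_pow, ← Polynomial.aeval_algHom_apply, hψ.map_x,
      hψ.map_w, hψ.map_z, add_sub_cancel]
  have hy : ψ (φ (cylMk m Q (X 1))) = cylMk m Q (X 1) := by
    apply hreg m
    have h := congrArg ψ hφ.map_y
    rw [← hφ.map_z, map_mul, map_pow, hψ.map_x, ← Polynomial.aeval_algHom_apply, hz] at h
    exact h.trans (cylMk_relation m Q).symm
  have hw : ψ (φ (cylMk m Q (X 3))) = cylMk m Q (X 3) := by
    apply hreg n
    have h := congrArg ψ hφ.map_w
    rw [← hφ.map_z, map_mul, map_pow, hψ.map_x, map_sub, ← Polynomial.aeval_algHom_apply, hz,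
      hψ.map_z, add_sub_cancel_left] at h
    exact h
  refine Ideal.Quotient.algHom_ext _ (MvPolynomial.algHom_ext fun i => ?_)
  fin_cases i
  · exact (congrArg ψ hφ.map_x).trans hψ.map_x
  · exact hy
  · exact hz
  · exact hw

theorem cylinders_of_classical_Danielewski_surfaces_explicit_iso
    (d n m : ℕ) (hd : 1 ≤ d) (hn : 1 ≤ n) (hm : 1 ≤ m)
    (a b : Fin d → ℂ) (ha : Function.Injective a) (hb : Function.Injective b)
    (P Q : Polynomial ℂ)
    (hP : P = ∏ i, (Polynomial.X - Polynomial.C (a i)))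
    (hQ : Q = ∏ i, (Polynomial.X - Polynomial.C (b i)))
    (f g : Polynomial ℂ)
    (hf0 : ∀ i, f.eval (b i) = a i)
    (hf1 : ∀ i, ∀ k, 1 ≤ k → k ≤ n - 1 → (Polynomial.derivative^[k] f).eval (b i) = 0)
    (hg0 : ∀ i, g.eval (a i) = b i)
    (hg1 : ∀ i, ∀ k, 1 ≤ k → k ≤ m - 1 → (Polynomial.derivative^[k] g).eval (a i) = 0) :
    ∃ Φ : CylRing m Q ≃ₐ[ℂ] CylRing n P,
      -- the conditions on Φ : B → A
      Φ (cylMk m Q (X 0)) = cylMk n P (X 0) ∧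
      Φ (cylMk m Q (X 2)) =
        Polynomial.aeval (cylMk n P (X 2)) g + (cylMk n P (X 0)) ^ m * cylMk n P (X 3) ∧
      (cylMk n P (X 0)) ^ m * Φ (cylMk m Q (X 1)) =
        Polynomial.aeval
          (Polynomial.aeval (cylMk n P (X 2)) g + (cylMk n P (X 0)) ^ m * cylMk n P (X 3)) Q ∧
      (cylMk n P (X 0)) ^ n * Φ (cylMk m Q (X 3)) =
        cylMk n P (X 2) - Polynomial.aeval
          (Polynomial.aeval (cylMk n P (X 2)) g + (cylMk n P (X 0)) ^ m * cylMk n P (X 3)) f ∧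
      -- the conditions on the inverse isomorphism Ψ = Φ⁻¹ : A → B
      Φ.symm (cylMk n P (X 0)) = cylMk m Q (X 0) ∧
      Φ.symm (cylMk n P (X 2)) =
        Polynomial.aeval (cylMk m Q (X 2)) f + (cylMk m Q (X 0)) ^ n * cylMk m Q (X 3) ∧
      (cylMk m Q (X 0)) ^ n * Φ.symm (cylMk n P (X 1)) =
        Polynomial.aeval
          (Polynomial.aeval (cylMk m Q (X 2)) f + (cylMk m Q (X 0)) ^ n * cylMk m Q (X 3)) P ∧
      (cylMk m Q (X 0)) ^ m * Φ.symm (cylMk n P (X 3)) =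
        cylMk m Q (X 2) - Polynomial.aeval
          (Polynomial.aeval (cylMk m Q (X 2)) f + (cylMk m Q (X 0)) ^ n * cylMk m Q (X 3)) g := by
  have : Nonempty (Fin d) := ⟨⟨0, hd⟩⟩
  have hP0 : P ≠ 0 := hP ▸ (Polynomial.monic_prod_X_sub_C a Finset.univ).ne_zero
  have hQ0 : Q ≠ 0 := hQ ▸ (Polynomial.monic_prod_X_sub_C b Finset.univ).ne_zero
  have hf i := X_sub_C_pow_dvd_sub_C (hf0 i) (hf1 i)
  have hg i := X_sub_C_pow_dvd_sub_C (hg0 i) (hg1 i)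
  obtain ⟨φ, hφ⟩ := exists_isCylTransition hn hm ha hP hQ hf hg
  obtain ⟨ψ, hψ⟩ := exists_isCylTransition hm hn hb hQ hP hg hf
  exact ⟨AlgEquiv.ofAlgHom φ ψ (hψ.comp_eq_id hn hP0 hφ) (hφ.comp_eq_id hm hQ0 hψ),
    hφ.map_x, hφ.map_z, hφ.map_y, hφ.map_w, hψ.map_x, hψ.map_z, hψ.map_y, hψ.map_w⟩
end

section
/- Let d, n, m ≥ 1 be integers and let P, Q ∈ ℂ[z] be monic polynomials of degree d, each splitting as a product of d pairwise distinct linear factors (i.e., having only simple roots). Then the ℂ-algebras ℂ[X,Y,Z,W]/(X^n Y − P(Z)) and ℂ[X,Y,Z,W]/(X^m Y − Q(Z)) are isomorphic. -/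
open MvPolynomial

namespace Polynomial

/-- Hermite-type interpolation: prescribed values, constant to order `k` at each node. -/
theorem exists_forall_X_sub_C_pow_dvd_sub_C {K ι : Type*} [Field K] [Finite ι]
    {a : ι → K} (ha : Function.Injective a)
    (b : ι → K) (k : ℕ) : ∃ g : K[X], ∀ i, (X - C (a i)) ^ k ∣ g - C (b i) := by
  obtain ⟨g, hg⟩ := Ideal.exists_forall_sub_mem_ideal
    (I := fun i ↦ Ideal.span {(X - C (a i)) ^ k})
    (fun i j hij ↦ by
      rw [Function.onFun, Ideal.isCoprime_span_singleton_iff]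
      exact (pairwise_coprime_X_sub_C ha hij).pow)
    (fun i ↦ C (b i))
  exact ⟨g, fun i ↦ Ideal.mem_span_singleton.mp (hg i)⟩

theorem sub_dvd_aeval_sub {R A : Type*} [CommRing R] [CommRing A] [Algebra R A] (s t : A)
    (p : R[X]) : s - t ∣ aeval s p - aeval t p := by
  simpa only [← eval_map_algebraMap] using sub_dvd_eval_sub s t (p.map (algebraMap R A))

section Divisibility

variable {K R ι : Type*} [Field K] [CommRing R] [Algebra K R] [Fintype ι]
  {a b : ι → K} {g h : K[X]} {n m : ℕ} {x z : R}

theorem pow_dvd_aeval_prod_of_interpolation (hn : 1 ≤ n)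
    (hg : ∀ i, (X - C (a i)) ^ m ∣ g - C (b i))
    (hz : x ^ n ∣ aeval z (∏ i, (X - C (a i)))) (w : R) :
    x ^ m ∣ aeval (aeval z g + x ^ m * w) (∏ i, (X - C (b i))) := by
  have hP : (∏ i, (X - C (a i))) ^ m ∣ (∏ i, (X - C (b i))).comp g := by
    rw [← Finset.prod_pow, prod_comp]
    exact Finset.prod_dvd_prod_of_dvd _ _ fun i _ ↦ by simpa using hg i
  have hx : x ^ m ∣ aeval (aeval z g) (∏ i, (X - C (b i))) := by
    rw [← aeval_comp]
    refine (pow_dvd_pow_of_dvd ((dvd_pow_self x (by lia)).trans hz) m).trans ?_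
    rw [← map_pow]
    exact _root_.map_dvd (aeval z) hP
  refine (dvd_sub_left hx).mp (dvd_trans ?_ (sub_dvd_aeval_sub _ _ _))
  simp

theorem prod_X_sub_C_dvd_X_sub_C_mul_basis [DecidableEq ι] (a : ι → K) (i : ι) :
    ∏ j, (X - C (a j)) ∣ (X - C (a i)) * Lagrange.basis Finset.univ a i := by
  rw [← Finset.mul_prod_erase _ _ (Finset.mem_univ i), Lagrange.basis]
  exact mul_dvd_mul_left _ (Finset.prod_dvd_prod_of_dvd _ _ fun j _ ↦ dvd_mul_left _ _)

theorem pow_dvd_sub_aeval_of_interpolation [Nonempty ι] (ha : Function.Injective a)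
    (hn : 1 ≤ n) (hm : 1 ≤ m)
    (hg : ∀ i, (X - C (a i)) ^ m ∣ g - C (b i))
    (hh : ∀ i, (X - C (b i)) ^ n ∣ h - C (a i))
    (hz : x ^ n ∣ aeval z (∏ i, (X - C (a i)))) (w : R) :
    x ^ n ∣ z - aeval (aeval z g + x ^ m * w) h := by
  classical
  set v := aeval z g + x ^ m * w with hv
  let e : ι → R := fun i ↦ aeval z (Lagrange.basis Finset.univ a i)
  have he : Ideal.span (Set.range e) = ⊤ := by
    rw [Ideal.eq_top_iff_one, ← map_one (aeval z : K[X] →ₐ[K] R),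
      ← Lagrange.sum_basis (s := Finset.univ) ha.injOn Finset.univ_nonempty, map_sum]
    exact Ideal.sum_mem _ fun i _ ↦ Ideal.subset_span ⟨i, rfl⟩
  have hez (i : ι) : x ^ n ∣ (z - algebraMap K R (a i)) * e i := by
    simpa [e] using hz.trans
      (_root_.map_dvd (aeval z) (prod_X_sub_C_dvd_X_sub_C_mul_basis a i))
  have hev (i : ι) : x ∣ (v - algebraMap K R (b i)) * e i := by
    have hgz : (z - algebraMap K R (a i)) ∣ aeval z g - algebraMap K R (b i) := by
      simpa using _root_.map_dvd (aeval z) ((dvd_pow_self _ (by lia)).trans (hg i))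
    have : (v - algebraMap K R (b i)) * e i =
        (aeval z g - algebraMap K R (b i)) * e i + x ^ m * (w * e i) := by rw [hv]; ring
    rw [this]
    exact dvd_add
      (((dvd_pow_self x (by lia)).trans (hez i)).trans (mul_dvd_mul_right hgz _))
      ((dvd_pow_self x (by lia)).mul_right _)
  have hle : Ideal.span ((fun r : R ↦ r ^ n) '' Set.range e) ≤
      Submodule.comap (LinearMap.mulRight R (z - aeval v h)) (Ideal.span {x ^ n}) := by
    rw [Ideal.span_le]
    rintro _ ⟨_, ⟨i, rfl⟩, rfl⟩
    have hhv : (v - algebraMap K R (b i)) ^ n ∣ aeval v h - algebraMap K R (a i) := by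
      simpa using _root_.map_dvd (aeval v) (hh i)
    have h₁ : x ^ n ∣ e i ^ n * (aeval v h - algebraMap K R (a i)) := by
      have := (pow_dvd_pow_of_dvd (hev i) n).trans
        ((mul_pow _ _ n).dvd.trans (mul_dvd_mul_right hhv _))
      rwa [mul_comm]
    have h₂ : x ^ n ∣ e i ^ n * (z - algebraMap K R (a i)) := by
      rw [mul_comm]
      exact (hez i).trans (mul_dvd_mul_left _ (dvd_pow_self _ (by lia)))
    have := dvd_sub h₂ h₁
    rw [← mul_sub, sub_sub_sub_cancel_right] at this
    exact Ideal.mem_span_singleton.mpr this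
  rw [Ideal.span_pow_eq_top _ he] at hle
  simpa [Ideal.mem_span_singleton] using hle (Submodule.mem_top (x := 1))

end Divisibility

end Polynomial

namespace CylRing

/-- The class of the `i`-th variable. -/
noncomputable def coord (k : ℕ) (P : Polynomial ℂ) (i : Fin 4) : CylRing k P :=
  Ideal.Quotient.mk _ (X i)

theorem pow_mul_coord_one (k : ℕ) (P : Polynomial ℂ) :
    coord k P 0 ^ k * coord k P 1 = Polynomial.aeval (coord k P 2) P := by
  have h : Polynomial.aeval (coord k P 2) P =
      Ideal.Quotient.mkₐ ℂ _ (Polynomial.aeval (X 2) P) :=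
    Polynomial.aeval_algHom_apply (Ideal.Quotient.mkₐ ℂ _) (X 2) P
  rw [h, coord, coord, ← map_pow, ← map_mul]
  exact Ideal.Quotient.mk_eq_mk_iff_sub_mem _ _ |>.mpr (Ideal.subset_span rfl)

theorem isLeftRegular_coord_zero {k : ℕ} {P : Polynomial ℂ} (hP : P ≠ 0) :
    IsLeftRegular (coord k P 0) := by
  rw [isLeftRegular_iff_right_eq_zero_of_mul]
  intro r hr
  obtain ⟨f, rfl⟩ := Ideal.Quotient.mk_surjective r
  rw [coord, ← map_mul, Ideal.Quotient.eq_zero_iff_mem, Ideal.mem_span_singleton] at hr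
  obtain ⟨q, hq⟩ := hr
  rw [Ideal.Quotient.eq_zero_iff_mem, Ideal.mem_span_singleton]
  rcases X_dvd_mul_iff.mp (Dvd.intro _ hq) with h | ⟨q, rfl⟩
  · obtain ⟨c, hc⟩ : ∃ c, P.eval c ≠ 0 := by
      by_contra! hc
      exact hP (Polynomial.funext (by simpa using hc))
    have := map_dvd (aeval ![0, 0, c, 0] : MvPolynomial (Fin 4) ℂ →ₐ[ℂ] ℂ) h
    rw [map_sub, ← Polynomial.aeval_algHom_apply] at this
    simp [hc] at this
  · exact ⟨q, mul_left_cancel₀ (X_ne_zero 0) (hq.trans (by ring))⟩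

theorem exists_algHom {k : ℕ} {P : Polynomial ℂ} {R : Type*} [CommRing R] [Algebra ℂ R]
    (v : Fin 4 → R) (hv : v 0 ^ k * v 1 = Polynomial.aeval (v 2) P) :
    ∃ φ : CylRing k P →ₐ[ℂ] R, ∀ i, φ (coord k P i) = v i := by
  refine ⟨Ideal.Quotient.liftₐ _ (aeval v) fun r hr ↦ ?_, fun i ↦ ?_⟩
  · obtain ⟨q, rfl⟩ := Ideal.mem_span_singleton.mp hr
    simp [← Polynomial.aeval_algHom_apply, hv]
  · exact aeval_X v i

theorem algHom_ext {k : ℕ} {P : Polynomial ℂ} {R : Type*} [CommRing R] [Algebra ℂ R]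
    {φ ψ : CylRing k P →ₐ[ℂ] R} (h : ∀ i, φ (coord k P i) = ψ (coord k P i)) : φ = ψ :=
  Ideal.Quotient.algHom_ext _ (MvPolynomial.algHom_ext h)

/-- An endomorphism fixing `x`, `z` and `x ^ m * w` is the identity. -/
theorem algHom_eq_id {k m : ℕ} {P : Polynomial ℂ} (hP : P ≠ 0)
    {φ : CylRing k P →ₐ[ℂ] CylRing k P} (h₀ : φ (coord k P 0) = coord k P 0)
    (h₂ : φ (coord k P 2) = coord k P 2)
    (h₃ : coord k P 0 ^ m * φ (coord k P 3) = coord k P 0 ^ m * coord k P 3) :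
    φ = AlgHom.id ℂ _ := by
  have hx := isLeftRegular_coord_zero (k := k) hP
  refine algHom_ext fun i ↦ ?_
  fin_cases i
  · exact h₀
  · refine hx.pow k ?_
    have := congrArg φ (pow_mul_coord_one k P)
    rw [map_mul, map_pow, h₀, ← Polynomial.aeval_algHom_apply, h₂, ← pow_mul_coord_one] at this
    exact this
  · exact h₂
  · exact hx.pow m h₃

/-- Over the cylinder of `x ^ n * y = P(z)`, the functions `x` and `g(z) + x ^ m * w` extend to a
morphism to the cylinder of `x ^ m * y = Q(z)`. -/
theorem exists_algHom_of_interpolation {ι : Type*} [Fintype ι] [Nonempty ι] {a b : ι → ℂ}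
    (ha : Function.Injective a) {n m : ℕ} (hn : 1 ≤ n) (hm : 1 ≤ m) {P Q g h : Polynomial ℂ}
    (hP : P = ∏ i, (Polynomial.X - Polynomial.C (a i)))
    (hQ : Q = ∏ i, (Polynomial.X - Polynomial.C (b i)))
    (hg : ∀ i, (Polynomial.X - Polynomial.C (a i)) ^ m ∣ g - Polynomial.C (b i))
    (hh : ∀ i, (Polynomial.X - Polynomial.C (b i)) ^ n ∣ h - Polynomial.C (a i)) :
    ∃ φ : CylRing m Q →ₐ[ℂ] CylRing n P, φ (coord m Q 0) = coord n P 0 ∧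
      φ (coord m Q 2) =
        Polynomial.aeval (coord n P 2) g + coord n P 0 ^ m * coord n P 3 ∧
      coord n P 0 ^ n * φ (coord m Q 3) =
        coord n P 2 - Polynomial.aeval (φ (coord m Q 2)) h := by
  have hz := Dvd.intro _ ((pow_mul_coord_one n P).trans
    (congrArg (Polynomial.aeval (coord n P 2)) hP))
  obtain ⟨u, hu⟩ := Polynomial.pow_dvd_aeval_prod_of_interpolation hn hg hz (coord n P 3)
  obtain ⟨t, ht⟩ := Polynomial.pow_dvd_sub_aeval_of_interpolation ha hn hm hg hh hz (coord n P 3)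
  obtain ⟨φ, hφ⟩ := exists_algHom (k := m) (P := Q)
    ![coord n P 0, u, Polynomial.aeval (coord n P 2) g + coord n P 0 ^ m * coord n P 3, t]
    (by rw [hQ]; exact hu.symm)
  refine ⟨φ, hφ 0, hφ 2, ?_⟩
  rw [hφ 2, hφ 3]
  exact ht.symm

/-- The morphisms of `exists_algHom_of_interpolation` in the two directions are mutually inverse. -/
theorem comp_eq_id {n m : ℕ} {P Q g h : Polynomial ℂ} (hP : P ≠ 0)
    {φ : CylRing m Q →ₐ[ℂ] CylRing n P} {ψ : CylRing n P →ₐ[ℂ] CylRing m Q}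
    (hφ₀ : φ (coord m Q 0) = coord n P 0)
    (hφ₂ : φ (coord m Q 2) =
      Polynomial.aeval (coord n P 2) g + coord n P 0 ^ m * coord n P 3)
    (hφ₃ : coord n P 0 ^ n * φ (coord m Q 3) =
      coord n P 2 - Polynomial.aeval (φ (coord m Q 2)) h)
    (hψ₀ : ψ (coord n P 0) = coord m Q 0)
    (hψ₂ : ψ (coord n P 2) =
      Polynomial.aeval (coord m Q 2) h + coord m Q 0 ^ n * coord m Q 3)
    (hψ₃ : coord m Q 0 ^ m * ψ (coord n P 3) =
      coord m Q 2 - Polynomial.aeval (ψ (coord n P 2)) g) :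
    φ.comp ψ = AlgHom.id ℂ _ := by
  have h₂ : φ (ψ (coord n P 2)) = coord n P 2 := by
    rw [hψ₂, map_add, map_mul, map_pow, hφ₀, hφ₃, ← Polynomial.aeval_algHom_apply]
    ring
  refine algHom_eq_id (m := m) hP (by simp [hψ₀, hφ₀]) h₂ ?_
  have := congrArg φ hψ₃
  rw [map_mul, map_pow, hφ₀, map_sub, ← Polynomial.aeval_algHom_apply, h₂, hφ₂,
    add_sub_cancel_left] at this
  exact this

end CylRing

theorem cylinders_of_classical_Danielewski_surfaces_isomorphic
    (d n m : ℕ) (hd : 1 ≤ d) (hn : 1 ≤ n) (hm : 1 ≤ m)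
    (P Q : Polynomial ℂ)
    -- P and Q are monic of degree d, splitting into d pairwise distinct linear factors
    (hP : ∃ a : Fin d → ℂ, Function.Injective a ∧
            P = ∏ i, (Polynomial.X - Polynomial.C (a i)))
    (hQ : ∃ b : Fin d → ℂ, Function.Injective b ∧
            Q = ∏ i, (Polynomial.X - Polynomial.C (b i))) :
    Nonempty (CylRing n P ≃ₐ[ℂ] CylRing m Q) := by
  obtain ⟨a, ha, hP⟩ := hP
  obtain ⟨b, hb, hQ⟩ := hQ
  have : Nonempty (Fin d) := ⟨⟨0, hd⟩⟩
  have hP₀ : P ≠ 0 := hP ▸ (Polynomial.monic_prod_X_sub_C a Finset.univ).ne_zero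
  have hQ₀ : Q ≠ 0 := hQ ▸ (Polynomial.monic_prod_X_sub_C b Finset.univ).ne_zero
  obtain ⟨g, hg⟩ := Polynomial.exists_forall_X_sub_C_pow_dvd_sub_C ha b m
  obtain ⟨h, hh⟩ := Polynomial.exists_forall_X_sub_C_pow_dvd_sub_C hb a n
  obtain ⟨φ, hφ₀, hφ₂, hφ₃⟩ :=
    CylRing.exists_algHom_of_interpolation ha hn hm hP hQ hg hh
  obtain ⟨ψ, hψ₀, hψ₂, hψ₃⟩ :=
    CylRing.exists_algHom_of_interpolation hb hm hn hQ hP hh hg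
  exact ⟨AlgEquiv.ofAlgHom ψ φ
    (CylRing.comp_eq_id hQ₀ hψ₀ hψ₂ hψ₃ hφ₀ hφ₂ hφ₃)
    (CylRing.comp_eq_id hP₀ hφ₀ hφ₂ hφ₃ hψ₀ hψ₂ hψ₃)⟩
end

section
/- Let n ≥ 1 and let Q(x,z) ∈ ℂ[x,z] be such that Q(0,z) ∈ ℂ[z] has degree d ≥ 2 and exactly d pairwise distinct roots r_1,…,r_d (all simple). For each i, let σ_i ∈ ℂ[x] be a polynomial of degree < n with σ_i(0) = r_i and x^n dividing Q(x,σ_i(x)) in ℂ[x]. Let g ∈ ℂ[x,t] be a polynomial such that g(x, r_i + x·t) ≡ σ_i(x) mod (x^n) in ℂ[x,t] for all 1 ≤ i ≤ d, and set P(z) = ∏_{i=1}^d (z − r_i). Then there exists a ℂ-algebra isomorphism Φ : ℂ[X,Y,Z,W]/(XY − P(Z)) → ℂ[X,Y,Z,W]/(X^n Y − Q(X,Z)) such that, writing x̄, ȳ, z̄, w̄ for the residue classes of X, Y, Z, W: Φ(x̄) = x̄, Φ(z̄) = z̄ + x̄ w̄, x̄ · Φ(ȳ) = P(z̄ + x̄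 w̄), and x̄^n · Φ(w̄) = z̄ − g(x̄, z̄ + x̄ w̄). -/
open MvPolynomial

/-- The coordinate ring `ℂ[X,Y,Z,W]/(X^n Y - Q(X,Z))` of the cylinder over the Danielewski
hypersurface `x^n y = Q(x,z)`, where `Q` is a polynomial in two variables (`X 0 = x`,
`X 1 = z`).  Variables of the ambient ring: `X 0 = X`, `X 1 = Y`, `X 2 = Z`, `X 3 = W`. -/
abbrev DHCylRing (n : ℕ) (Q : MvPolynomial (Fin 2) ℂ) : Type :=
  MvPolynomial (Fin 4) ℂ ⧸
    Ideal.span {(X 0 : MvPolynomial (Fin 4) ℂ) ^ n * X 1 -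
      MvPolynomial.aeval ![(X 0 : MvPolynomial (Fin 4) ℂ), X 2] Q}

/-- The coordinate ring `ℂ[X,Y,Z,W]/(X Y - P(Z))` of the cylinder over the classical
Danielewski surface `x y = P(z)`. -/
abbrev WCylRing (P : Polynomial ℂ) : Type :=
  MvPolynomial (Fin 4) ℂ ⧸
    Ideal.span {(X 0 : MvPolynomial (Fin 4) ℂ) * X 1 - Polynomial.aeval (X 2) P}

noncomputable abbrev dhMk (n : ℕ) (Q : MvPolynomial (Fin 2) ℂ) :
    MvPolynomial (Fin 4) ℂ →+* DHCylRing n Q :=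
  Ideal.Quotient.mk _

noncomputable abbrev wMk (P : Polynomial ℂ) :
    MvPolynomial (Fin 4) ℂ →+* WCylRing P :=
  Ideal.Quotient.mk _

lemma dvd_of_dvd_localization_maximal {R : Type*} [CommRing R] {a b : R}
    (h : ∀ (m : Ideal R) [m.IsMaximal], algebraMap R (Localization.AtPrime m) a ∣
      algebraMap R (Localization.AtPrime m) b) : a ∣ b := by
  rw [← Ideal.mem_span_singleton]
  refine Ideal.mem_of_localization_maximal fun m hm => ?_
  rw [Ideal.map_span, Set.image_singleton, Ideal.mem_span_singleton]
  exact h m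

/-- Uniqueness part of Hensel's lemma at a simple root, for divisibility: a congruence between
values of a polynomial at two lifts of a simple root of the reduction forces a congruence between
the lifts. -/
lemma dvd_sub_of_dvd_eval_sub {R : Type*} [CommRing R] [IsLocalRing R] {f : Polynomial R} {a u v : R}
    (huv : u - v ∈ IsLocalRing.maximalIdeal R) (hf : IsUnit (f.derivative.eval v))
    (h : a ∣ f.eval u - f.eval v) : a ∣ u - v := by
  obtain ⟨k, hk⟩ := f.binomExpansion v (u - v)
  rw [add_sub_cancel] at hk
  have hu : IsUnit (f.derivative.eval v + k * (u - v)) := by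
    by_contra hn
    have h1 := Ideal.sub_mem _ ((IsLocalRing.mem_maximalIdeal _).2 hn) (Ideal.mul_mem_left _ k huv)
    rw [add_sub_cancel_right] at h1
    exact (IsLocalRing.mem_maximalIdeal _).1 h1 hf
  rw [hk, show f.eval v + f.derivative.eval v * (u - v) + k * (u - v) ^ 2 - f.eval v =
    (u - v) * (f.derivative.eval v + k * (u - v)) by ring] at h
  exact hu.dvd_mul_right.1 h

section CongruenceLemmas

variable {R S : Type*} [CommRing R] [Algebra ℂ R] [CommRing S] [Algebra ℂ S]

lemma map_aeval_pair (φ : R →ₐ[ℂ] S) (p : MvPolynomial (Fin 2) ℂ) (a b : R) :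
    φ (MvPolynomial.aeval ![a, b] p) = MvPolynomial.aeval ![φ a, φ b] p := by
  rw [← AlgHom.comp_apply, MvPolynomial.comp_aeval]
  congr 2
  ext i
  fin_cases i <;> rfl

lemma dvd_aeval_pair_sub {a x₁ x₂ y₁ y₂ : R} (hx : a ∣ x₁ - x₂) (hy : a ∣ y₁ - y₂)
    (p : MvPolynomial (Fin 2) ℂ) :
    a ∣ MvPolynomial.aeval ![x₁, y₁] p - MvPolynomial.aeval ![x₂, y₂] p := by
  rw [← Ideal.mem_span_singleton, ← Ideal.Quotient.mk_eq_mk_iff_sub_mem,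
    ← Ideal.Quotient.mkₐ_eq_mk ℂ] at *
  rw [map_aeval_pair, map_aeval_pair, hx, hy]

lemma dvd_polynomial_aeval_sub {a s t : R} (h : a ∣ s - t) (p : Polynomial ℂ) :
    a ∣ Polynomial.aeval s p - Polynomial.aeval t p := by
  rw [Polynomial.aeval_def, Polynomial.aeval_def, Polynomial.eval₂_eq_eval_map,
    Polynomial.eval₂_eq_eval_map]
  exact h.trans (Polynomial.sub_dvd_eval_sub _ _ _)

end CongruenceLemmas

section LocalRing

variable {R : Type*} [CommRing R] [Algebra ℂ R] [IsLocalRing R] {d : ℕ} {r : Fin d → ℂ}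

/-- In a local `ℂ`-algebra, if `x` is a non-unit dividing `∏ (s - rᵢ)` with distinct `rᵢ`, then
`x` divides one of the factors. -/
lemma exists_eq_add_mul_of_dvd_prod (hr : Function.Injective r) {x s : R}
    (hx : x ∈ IsLocalRing.maximalIdeal R)
    (h : x ∣ Polynomial.aeval s (∏ i, (Polynomial.X - Polynomial.C (r i)))) :
    ∃ i t, s = algebraMap ℂ R (r i) + x * t := by
  simp only [map_prod, map_sub, Polynomial.aeval_X, Polynomial.aeval_C] at h
  obtain ⟨i, -, hi⟩ := (Ideal.IsPrime.prod_mem_iff).1 (Ideal.mem_of_dvd _ h hx)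
  have hu : IsUnit (∏ j ∈ Finset.univ.erase i, (s - algebraMap ℂ R (r j))) := by
    rw [IsUnit.prod_iff]
    intro j hj
    by_contra hj'
    have hsub : algebraMap ℂ R (r i - r j) ∈ IsLocalRing.maximalIdeal R := by
      have := Ideal.sub_mem _ ((IsLocalRing.mem_maximalIdeal _).2 hj') hi
      simpa using this
    have hne : r i - r j ≠ 0 := sub_ne_zero.2 fun e => Finset.ne_of_mem_erase hj (hr e).symm
    exact (IsLocalRing.mem_maximalIdeal _).1 hsub (hne.isUnit.map _)
  rw [← Finset.mul_prod_erase _ _ (Finset.mem_univ i)] at h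
  obtain ⟨t, ht⟩ := hu.dvd_mul_right.1 h
  exact ⟨i, t, by rw [← ht]; ring⟩

lemma isUnit_eval_derivative_at_simple_root (hr : Function.Injective r) {c : ℂ} (hc : c ≠ 0)
    {Q : MvPolynomial (Fin 2) ℂ}
    (hQ0 : MvPolynomial.aeval ![(0 : Polynomial ℂ), Polynomial.X] Q =
      Polynomial.C c * ∏ i, (Polynomial.X - Polynomial.C (r i)))
    {x v : R} (hx : x ∈ IsLocalRing.maximalIdeal R) (i : Fin d)
    (hv : v - algebraMap ℂ R (r i) ∈ IsLocalRing.maximalIdeal R) :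
    IsUnit ((MvPolynomial.aeval ![Polynomial.C x, (Polynomial.X : Polynomial R)]
      Q).derivative.eval v) := by
  rw [← IsLocalRing.residue_ne_zero_iff_isUnit, ← Polynomial.eval_map_apply,
    ← Polynomial.derivative_map]
  have hxr : IsLocalRing.residue R x = 0 := (IsLocalRing.residue_eq_zero_iff x).2 hx
  have hvr : IsLocalRing.residue R v = algebraMap ℂ (IsLocalRing.ResidueField R) (r i) := by
    rw [← sub_eq_zero, IsScalarTower.algebraMap_apply ℂ R (IsLocalRing.ResidueField R)]
    exact (map_sub (IsLocalRing.residue R) _ _).symm.trans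
      ((IsLocalRing.residue_eq_zero_iff _).2 hv)
  have hmap : (MvPolynomial.aeval ![Polynomial.C x, (Polynomial.X : Polynomial R)] Q).map
      (IsLocalRing.residue R) = (Polynomial.C c * ∏ i, (Polynomial.X - Polynomial.C (r i))).map
        (algebraMap ℂ (IsLocalRing.ResidueField R)) := by
    rw [← hQ0]
    have h1 := map_aeval_pair (Polynomial.mapAlgHom (IsScalarTower.toAlgHom ℂ R
      (IsLocalRing.ResidueField R))) Q (Polynomial.C x) Polynomial.X
    have h2 := map_aeval_pair (Polynomial.mapAlgHom (Algebra.ofId ℂ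
      (IsLocalRing.ResidueField R))) Q 0 Polynomial.X
    have hxr' : algebraMap R (IsLocalRing.ResidueField R) x = 0 := hxr
    simp only [Polynomial.coe_mapAlgHom, Polynomial.map_C, Polynomial.map_X, RingHom.coe_coe,
      IsScalarTower.coe_toAlgHom', hxr', map_zero] at h1 h2
    exact h1.trans h2.symm
  rw [hmap, hvr, Polynomial.derivative_map, Polynomial.eval_map_apply]
  refine (map_ne_zero _).2 ?_
  rw [Polynomial.derivative_C_mul, Polynomial.eval_C_mul,
    ← Finset.mul_prod_erase _ _ (Finset.mem_univ i)]
  simp only [Polynomial.derivative_mul, Polynomial.derivative_X_sub_C, Polynomial.eval_add,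
    Polynomial.eval_mul, Polynomial.eval_sub, Polynomial.eval_X, Polynomial.eval_C, sub_self,
    Polynomial.eval_prod, zero_mul, add_zero, one_mul]
  exact mul_ne_zero hc (Finset.prod_ne_zero_iff.2 fun j hj =>
    sub_ne_zero.2 fun e => Finset.ne_of_mem_erase hj (hr e).symm)

end LocalRing

section Danielewski

variable {R : Type*} [CommRing R] [Algebra ℂ R] {n d : ℕ} {r : Fin d → ℂ}
  {σ : Fin d → Polynomial ℂ} {Q g : MvPolynomial (Fin 2) ℂ}

lemma pow_dvd_aeval_sub_aeval {ρ : ℂ} {τ : Polynomial ℂ}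
    (hg : MvPolynomial.aeval ![(X 0 : MvPolynomial (Fin 2) ℂ), C ρ + X 0 * X 1] g -
      Polynomial.aeval (X 0 : MvPolynomial (Fin 2) ℂ) τ ∈
        Ideal.span {(X 0 : MvPolynomial (Fin 2) ℂ) ^ n}) (x t : R) :
    x ^ n ∣ MvPolynomial.aeval ![x, algebraMap ℂ R ρ + x * t] g - Polynomial.aeval x τ := by
  have h := map_dvd (MvPolynomial.aeval (R := ℂ) ![x, t]) (Ideal.mem_span_singleton.1 hg)
  rw [map_sub, map_aeval_pair, ← Polynomial.aeval_algHom_apply] at h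
  simpa using h

lemma dvd_aeval_sub_algebraMap_eval_zero (τ : Polynomial ℂ) (x : R) :
    x ∣ Polynomial.aeval x τ - algebraMap ℂ R (τ.eval 0) := by
  have h := dvd_polynomial_aeval_sub (a := x) (s := x) (t := 0) (by simp) τ
  rwa [Polynomial.aeval_def (0 : R), Polynomial.eval₂_at_zero,
    Polynomial.coeff_zero_eq_eval_zero] at h

lemma map_dvd_aeval_map {S : Type*} [CommRing S] [Algebra ℂ S] (φ : R →ₐ[ℂ] S) {x s : R}
    {p : Polynomial ℂ} (h : x ∣ Polynomial.aeval s p) : φ x ∣ Polynomial.aeval (φ s) p := by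
  rw [Polynomial.aeval_algHom_apply]
  exact map_dvd φ h

lemma dvd_sub_aeval (hn : 1 ≤ n) (hr : Function.Injective r) (hσ0 : ∀ i, (σ i).eval 0 = r i)
    (hg : ∀ i, MvPolynomial.aeval ![(X 0 : MvPolynomial (Fin 2) ℂ), C (r i) + X 0 * X 1] g -
      Polynomial.aeval (X 0 : MvPolynomial (Fin 2) ℂ) (σ i) ∈
        Ideal.span {(X 0 : MvPolynomial (Fin 2) ℂ) ^ n})
    {x s : R} (hs : x ∣ Polynomial.aeval s (∏ i, (Polynomial.X - Polynomial.C (r i)))) :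
    x ∣ s - MvPolynomial.aeval ![x, s] g := by
  refine dvd_of_dvd_localization_maximal fun m _ => ?_
  have key : ∀ φ : R →ₐ[ℂ] Localization.AtPrime m,
      φ x ∣ φ (s - MvPolynomial.aeval ![x, s] g) := by
    intro φ
    rw [map_sub, map_aeval_pair]
    by_cases hx : IsUnit (φ x)
    · exact hx.dvd
    obtain ⟨i, t, ht⟩ := exists_eq_add_mul_of_dvd_prod hr ((IsLocalRing.mem_maximalIdeal _).2 hx)
      (map_dvd_aeval_map φ hs)
    have h1 := (dvd_pow_self (φ x) (by omega : n ≠ 0)).trans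
      (pow_dvd_aeval_sub_aeval (hg i) (φ x) t)
    have h2 := dvd_aeval_sub_algebraMap_eval_zero (σ i) (φ x)
    rw [← ht] at h1
    rw [hσ0] at h2
    have h3 : φ x ∣ φ s - algebraMap ℂ _ (r i) := ⟨t, by rw [ht]; ring⟩
    convert dvd_sub h3 (dvd_add h1 h2) using 1
    ring
  exact key (IsScalarTower.toAlgHom ℂ R _)

lemma pow_dvd_aeval_aeval (hr : Function.Injective r)
    (hσdvd : ∀ i, (Polynomial.X : Polynomial ℂ) ^ n ∣
      MvPolynomial.aeval ![Polynomial.X, σ i] Q)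
    (hg : ∀ i, MvPolynomial.aeval ![(X 0 : MvPolynomial (Fin 2) ℂ), C (r i) + X 0 * X 1] g -
      Polynomial.aeval (X 0 : MvPolynomial (Fin 2) ℂ) (σ i) ∈
        Ideal.span {(X 0 : MvPolynomial (Fin 2) ℂ) ^ n})
    {x s : R} (hs : x ∣ Polynomial.aeval s (∏ i, (Polynomial.X - Polynomial.C (r i)))) :
    x ^ n ∣ MvPolynomial.aeval ![x, MvPolynomial.aeval ![x, s] g] Q := by
  refine dvd_of_dvd_localization_maximal fun m _ => ?_
  have key : ∀ φ : R →ₐ[ℂ] Localization.AtPrime m,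
      φ (x ^ n) ∣ φ (MvPolynomial.aeval ![x, MvPolynomial.aeval ![x, s] g] Q) := by
    intro φ
    rw [map_pow, map_aeval_pair, map_aeval_pair]
    by_cases hx : IsUnit (φ x)
    · exact (hx.pow n).dvd
    obtain ⟨i, t, ht⟩ := exists_eq_add_mul_of_dvd_prod hr ((IsLocalRing.mem_maximalIdeal _).2 hx)
      (map_dvd_aeval_map φ hs)
    have h1 := pow_dvd_aeval_sub_aeval (hg i) (φ x) t
    rw [← ht] at h1
    have h2 := map_dvd (Polynomial.aeval (R := ℂ) (φ x)) (hσdvd i)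
    rw [map_aeval_pair, map_pow, Polynomial.aeval_X] at h2
    exact (dvd_iff_dvd_of_dvd_sub (dvd_aeval_pair_sub (by simp) h1 Q)).2 h2
  exact key (IsScalarTower.toAlgHom ℂ R _)

lemma pow_dvd_sub_aeval_s2 (hr : Function.Injective r) {c : ℂ} (hc : c ≠ 0)
    (hQ0 : MvPolynomial.aeval ![(0 : Polynomial ℂ), Polynomial.X] Q =
      Polynomial.C c * ∏ i, (Polynomial.X - Polynomial.C (r i)))
    (hσ0 : ∀ i, (σ i).eval 0 = r i)
    (hσdvd : ∀ i, (Polynomial.X : Polynomial ℂ) ^ n ∣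
      MvPolynomial.aeval ![Polynomial.X, σ i] Q)
    (hg : ∀ i, MvPolynomial.aeval ![(X 0 : MvPolynomial (Fin 2) ℂ), C (r i) + X 0 * X 1] g -
      Polynomial.aeval (X 0 : MvPolynomial (Fin 2) ℂ) (σ i) ∈
        Ideal.span {(X 0 : MvPolynomial (Fin 2) ℂ) ^ n})
    {x z s : R} (hs : x ∣ Polynomial.aeval s (∏ i, (Polynomial.X - Polynomial.C (r i))))
    (hzs : x ∣ z - s) (hz : x ^ n ∣ MvPolynomial.aeval ![x, z] Q) :
    x ^ n ∣ z - MvPolynomial.aeval ![x, s] g := by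
  refine dvd_of_dvd_localization_maximal fun m _ => ?_
  have key : ∀ φ : R →ₐ[ℂ] Localization.AtPrime m,
      φ (x ^ n) ∣ φ (z - MvPolynomial.aeval ![x, s] g) := by
    intro φ
    rw [map_pow, map_sub, map_aeval_pair]
    by_cases hx : IsUnit (φ x)
    · exact (hx.pow n).dvd
    replace hx := (IsLocalRing.mem_maximalIdeal _).2 hx
    obtain ⟨i, t, ht⟩ := exists_eq_add_mul_of_dvd_prod hr hx (map_dvd_aeval_map φ hs)
    have h1 := pow_dvd_aeval_sub_aeval (hg i) (φ x) t
    rw [← ht] at h1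
    have h2 := map_dvd (Polynomial.aeval (R := ℂ) (φ x)) (hσdvd i)
    rw [map_aeval_pair, map_pow, Polynomial.aeval_X] at h2
    have h3 := map_dvd φ hz
    rw [map_aeval_pair, map_pow] at h3
    have h4 := dvd_aeval_sub_algebraMap_eval_zero (σ i) (φ x)
    rw [hσ0] at h4
    have h5 : φ x ∣ φ z - Polynomial.aeval (φ x) (σ i) := by
      have h6 := map_dvd φ hzs
      rw [map_sub] at h6
      have h7 : φ x ∣ φ s - algebraMap ℂ _ (r i) := ⟨t, by rw [ht]; ring⟩
      convert dvd_sub (dvd_add h6 h7) h4 using 1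
      ring
    have heval : ∀ u, (MvPolynomial.aeval ![Polynomial.C (φ x), Polynomial.X] Q).eval u =
        MvPolynomial.aeval ![φ x, u] Q := fun u => by
      have h8 := map_aeval_pair ((Polynomial.aeval (R := Localization.AtPrime m) u).restrictScalars
        ℂ) Q (Polynomial.C (φ x)) Polynomial.X
      simpa [Polynomial.coe_aeval_eq_eval] using h8
    have h9 : φ x ^ n ∣ φ z - Polynomial.aeval (φ x) (σ i) := by
      refine dvd_sub_of_dvd_eval_sub (Ideal.mem_of_dvd _ h5 hx)
        (isUnit_eval_derivative_at_simple_root hr hc hQ0 hx i (Ideal.mem_of_dvd _ h4 hx)) ?_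
      rw [heval, heval]
      exact dvd_sub h3 h2
    convert dvd_sub h9 h1 using 1
    ring
  exact key (IsScalarTower.toAlgHom ℂ R _)

lemma dvd_aeval_prod_of_pow_dvd (hn : 1 ≤ n) {c : ℂ} (hc : c ≠ 0) {P : Polynomial ℂ}
    (hQ0 : MvPolynomial.aeval ![(0 : Polynomial ℂ), Polynomial.X] Q = Polynomial.C c * P)
    {x z s : R} (hzs : x ∣ s - z) (hz : x ^ n ∣ MvPolynomial.aeval ![x, z] Q) :
    x ∣ Polynomial.aeval s P := by
  have h1 := congrArg (Polynomial.aeval (R := ℂ) z) hQ0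
  rw [map_aeval_pair, map_mul, map_zero, Polynomial.aeval_X, Polynomial.aeval_C] at h1
  have h2 := dvd_aeval_pair_sub (a := x) (x₁ := x) (x₂ := 0) (y₁ := z) (y₂ := z) (by simp)
    (by simp) Q
  rw [h1] at h2
  have h3 := (dvd_iff_dvd_of_dvd_sub h2).1 ((dvd_pow_self x (by omega : n ≠ 0)).trans hz)
  exact (dvd_iff_dvd_of_dvd_sub (dvd_polynomial_aeval_sub hzs P)).2
    ((hc.isUnit.map (algebraMap ℂ R)).dvd_mul_left.1 h3)

end Danielewski

lemma isLeftRegular_mk_of_prime {A : Type*} [CommRing A] [IsDomain A] {p F : A} (hp : Prime p)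
    (hF : ¬ p ∣ F) : IsLeftRegular (Ideal.Quotient.mk (Ideal.span {F}) p) := by
  rw [isLeftRegular_iff_right_eq_zero_of_mul]
  intro a ha
  obtain ⟨a, rfl⟩ := Ideal.Quotient.mk_surjective a
  rw [← map_mul, Ideal.Quotient.eq_zero_iff_mem, Ideal.mem_span_singleton] at ha
  obtain ⟨h, hh⟩ := ha
  obtain ⟨k, rfl⟩ := (hp.dvd_or_dvd (a := F) (b := h) ⟨a, hh.symm⟩).resolve_left hF
  rw [Ideal.Quotient.eq_zero_iff_mem, Ideal.mem_span_singleton]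
  exact ⟨k, mul_left_cancel₀ hp.ne_zero (by rw [hh]; ring)⟩

lemma not_X_dvd_of_aeval_ne_zero {F : MvPolynomial (Fin 4) ℂ}
    (h : MvPolynomial.aeval ![0, 0, (Polynomial.X : Polynomial ℂ), 0] F ≠ 0) : ¬ X 0 ∣ F := by
  intro hd
  have := map_dvd (MvPolynomial.aeval (R := ℂ) ![0, 0, (Polynomial.X : Polynomial ℂ), 0]) hd
  simp only [aeval_X, Matrix.cons_val_zero, zero_dvd_iff] at this
  exact h this

lemma prod_X_sub_C_ne_zero {d : ℕ} (r : Fin d → ℂ) :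
    ∏ i, (Polynomial.X - Polynomial.C (r i)) ≠ 0 :=
  Finset.prod_ne_zero_iff.2 fun i _ => Polynomial.X_sub_C_ne_zero (r i)

lemma quotient_algHom_ext {F : MvPolynomial (Fin 4) ℂ} {S : Type*} [CommRing S] [Algebra ℂ S]
    {φ ψ : (MvPolynomial (Fin 4) ℂ ⧸ Ideal.span {F}) →ₐ[ℂ] S}
    (h : ∀ i, φ (Ideal.Quotient.mk _ (X i)) = ψ (Ideal.Quotient.mk _ (X i))) : φ = ψ :=
  Ideal.Quotient.algHom_ext _ (MvPolynomial.algHom_ext h)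

lemma exists_quotient_algHom {F : MvPolynomial (Fin 4) ℂ} {S : Type*} [CommRing S] [Algebra ℂ S]
    (v : Fin 4 → S) (hv : MvPolynomial.aeval v F = 0) :
    ∃ φ : (MvPolynomial (Fin 4) ℂ ⧸ Ideal.span {F}) →ₐ[ℂ] S,
      ∀ i, φ (Ideal.Quotient.mk _ (X i)) = v i := by
  refine ⟨Ideal.Quotient.liftₐ _ (MvPolynomial.aeval v) fun a ha => ?_, fun i => ?_⟩
  · obtain ⟨b, rfl⟩ := Ideal.mem_span_singleton.1 ha
    rw [map_mul, hv, zero_mul]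
  · exact (Ideal.Quotient.liftₐ_apply _ _ _ _).trans (MvPolynomial.aeval_X v i)

theorem cylinder_over_Danielewski_hypersurface_explicit_iso
    (n : ℕ) (hn : 1 ≤ n) (d : ℕ) (hd : 2 ≤ d)
    (Q : MvPolynomial (Fin 2) ℂ)
    (r : Fin d → ℂ) (hr : Function.Injective r) (c : ℂ) (hc : c ≠ 0)
    -- Q(0,z) has degree d and exactly the d pairwise distinct simple roots r₁,…,r_d
    (hQ0 : MvPolynomial.aeval ![(0 : Polynomial ℂ), Polynomial.X] Q =
      Polynomial.C c * ∏ i, (Polynomial.X - Polynomial.C (r i)))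
    (σ : Fin d → Polynomial ℂ)
    (hσdeg : ∀ i, (σ i).degree < n)
    (hσ0 : ∀ i, (σ i).eval 0 = r i)
    (hσdvd : ∀ i, (Polynomial.X : Polynomial ℂ) ^ n ∣
      MvPolynomial.aeval ![Polynomial.X, σ i] Q)
    (g : MvPolynomial (Fin 2) ℂ)
    -- g(x, rᵢ + x·t) ≡ σᵢ(x) mod (xⁿ) in ℂ[x,t]
    (hg : ∀ i, MvPolynomial.aeval ![(X 0 : MvPolynomial (Fin 2) ℂ), C (r i) + X 0 * X 1] g -
            Polynomial.aeval (X 0 : MvPolynomial (Fin 2) ℂ) (σ i) ∈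
          Ideal.span {(X 0 : MvPolynomial (Fin 2) ℂ) ^ n})
    (P : Polynomial ℂ) (hP : P = ∏ i, (Polynomial.X - Polynomial.C (r i))) :
    ∃ Φ : WCylRing P ≃ₐ[ℂ] DHCylRing n Q,
      Φ (wMk P (X 0)) = dhMk n Q (X 0) ∧
      Φ (wMk P (X 2)) = dhMk n Q (X 2) + dhMk n Q (X 0) * dhMk n Q (X 3) ∧
      dhMk n Q (X 0) * Φ (wMk P (X 1)) =
        Polynomial.aeval (dhMk n Q (X 2) + dhMk n Q (X 0) * dhMk n Q (X 3)) P ∧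
      (dhMk n Q (X 0)) ^ n * Φ (wMk P (X 3)) =
        dhMk n Q (X 2) -
          MvPolynomial.aeval
            ![dhMk n Q (X 0), dhMk n Q (X 2) + dhMk n Q (X 0) * dhMk n Q (X 3)] g := by
  have hxA : IsLeftRegular (wMk P (X 0)) := by
    refine isLeftRegular_mk_of_prime (MvPolynomial.X_prime) (not_X_dvd_of_aeval_ne_zero ?_)
    rw [map_sub, ← Polynomial.aeval_algHom_apply]
    simpa [hP] using prod_X_sub_C_ne_zero r
  have hxB : IsLeftRegular (dhMk n Q (X 0)) := by
    refine isLeftRegular_mk_of_prime (MvPolynomial.X_prime) (not_X_dvd_of_aeval_ne_zero ?_)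
    rw [map_sub, map_aeval_pair]
    simp only [map_mul, map_pow, aeval_X, Matrix.cons_val]
    rw [hQ0, mul_zero, zero_sub]
    exact neg_ne_zero.2 (mul_ne_zero (Polynomial.C_ne_zero.2 hc) (prod_X_sub_C_ne_zero r))
  have hrelA : wMk P (X 0) * wMk P (X 1) = Polynomial.aeval (wMk P (X 2)) P := by
    have h := Polynomial.aeval_algHom_apply (Ideal.Quotient.mkₐ ℂ (Ideal.span
      {(X 0 : MvPolynomial (Fin 4) ℂ) * X 1 - Polynomial.aeval (X 2) P}))
      (X 2 : MvPolynomial (Fin 4) ℂ) P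
    rw [← map_mul]
    exact ((Ideal.Quotient.mk_eq_mk_iff_sub_mem _ _).2
      (Ideal.mem_span_singleton_self _)).trans h.symm
  have hrelB : dhMk n Q (X 0) ^ n * dhMk n Q (X 1) =
      MvPolynomial.aeval ![dhMk n Q (X 0), dhMk n Q (X 2)] Q := by
    have h := map_aeval_pair (Ideal.Quotient.mkₐ ℂ (Ideal.span
      {(X 0 : MvPolynomial (Fin 4) ℂ) ^ n * X 1 -
        MvPolynomial.aeval ![(X 0 : MvPolynomial (Fin 4) ℂ), X 2] Q})) Q (X 0) (X 2)
    rw [← map_pow, ← map_mul]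
    exact ((Ideal.Quotient.mk_eq_mk_iff_sub_mem _ _).2
      (Ideal.mem_span_singleton_self _)).trans h
  have hxnA := hxA.pow n
  have hxnB := hxB.pow n
  have hextA := @quotient_algHom_ext
    ((X 0 : MvPolynomial (Fin 4) ℂ) * X 1 - Polynomial.aeval (X 2) P) (WCylRing P) _ _
  have hextB := @quotient_algHom_ext
    ((X 0 : MvPolynomial (Fin 4) ℂ) ^ n * X 1 -
      MvPolynomial.aeval ![(X 0 : MvPolynomial (Fin 4) ℂ), X 2] Q) (DHCylRing n Q) _ _
  have hliftA := @exists_quotient_algHom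
    ((X 0 : MvPolynomial (Fin 4) ℂ) * X 1 - Polynomial.aeval (X 2) P) (DHCylRing n Q) _ _
  have hliftB := @exists_quotient_algHom
    ((X 0 : MvPolynomial (Fin 4) ℂ) ^ n * X 1 -
      MvPolynomial.aeval ![(X 0 : MvPolynomial (Fin 4) ℂ), X 2] Q) (WCylRing P) _ _
  change ∀ φ ψ : WCylRing P →ₐ[ℂ] WCylRing P,
    (∀ i, φ (wMk P (X i)) = ψ (wMk P (X i))) → φ = ψ at hextA
  change ∀ φ ψ : DHCylRing n Q →ₐ[ℂ] DHCylRing n Q,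
    (∀ i, φ (dhMk n Q (X i)) = ψ (dhMk n Q (X i))) → φ = ψ at hextB
  change ∀ v : Fin 4 → DHCylRing n Q, _ → ∃ φ : WCylRing P →ₐ[ℂ] DHCylRing n Q,
    ∀ i, φ (wMk P (X i)) = v i at hliftA
  change ∀ v : Fin 4 → WCylRing P, _ → ∃ φ : DHCylRing n Q →ₐ[ℂ] WCylRing P,
    ∀ i, φ (dhMk n Q (X i)) = v i at hliftB
  generalize wMk P = α at *
  generalize dhMk n Q = β at *
  have hPB : β (X 0) ∣ Polynomial.aeval (β (X 2) + β (X 0) * β (X 3)) P :=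
    dvd_aeval_prod_of_pow_dvd hn hc (hP ▸ hQ0) ⟨β (X 3), by ring⟩ ⟨_, hrelB.symm⟩
  obtain ⟨y', hy'⟩ := hPB
  obtain ⟨w', hw'⟩ := pow_dvd_sub_aeval_s2 hr hc hQ0 hσ0 hσdvd hg (hP ▸ Dvd.intro _ hy'.symm)
    (z := β (X 2)) (s := β (X 2) + β (X 0) * β (X 3)) ⟨-β (X 3), by ring⟩ ⟨_, hrelB.symm⟩
  obtain ⟨Φ, hΦ⟩ := hliftA ![β (X 0), y', β (X 2) + β (X 0) * β (X 3), w'] (by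
    rw [map_sub, ← Polynomial.aeval_algHom_apply]
    simp [hy'])
  have hPA : α (X 0) ∣ Polynomial.aeval (α (X 2)) (∏ i, (Polynomial.X - Polynomial.C (r i))) :=
    hP ▸ ⟨_, hrelA.symm⟩
  obtain ⟨ζ, hζ⟩ : ∃ ζ, ζ = MvPolynomial.aeval ![α (X 0), α (X 2)] g + α (X 0) ^ n * α (X 3) :=
    ⟨_, rfl⟩
  obtain ⟨ω, hω⟩ : α (X 0) ∣ α (X 2) - ζ := by
    have h := dvd_sub (dvd_sub_aeval hn hr hσ0 hg hPA)
      ((dvd_pow_self (α (X 0)) (by omega : n ≠ 0)).mul_right (α (X 3)))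
    rwa [sub_sub, ← hζ] at h
  obtain ⟨η, hη⟩ : α (X 0) ^ n ∣ MvPolynomial.aeval ![α (X 0), ζ] Q :=
    (dvd_iff_dvd_of_dvd_sub (dvd_aeval_pair_sub (by simp) ⟨α (X 3), by rw [hζ]; ring⟩ Q)).2
      (pow_dvd_aeval_aeval hr hσdvd hg hPA)
  obtain ⟨Ψ, hΨ⟩ := hliftB ![α (X 0), η, ζ, ω] (by
    rw [map_sub, map_aeval_pair]
    simp [hη])
  have hΦx : Φ (α (X 0)) = β (X 0) := hΦ 0
  have hΦy : Φ (α (X 1)) = y' := hΦ 1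
  have hΦz : Φ (α (X 2)) = β (X 2) + β (X 0) * β (X 3) := hΦ 2
  have hΦw : Φ (α (X 3)) = w' := hΦ 3
  have hΨx : Ψ (β (X 0)) = α (X 0) := hΨ 0
  have hΨy : Ψ (β (X 1)) = η := hΨ 1
  have hΨz : Ψ (β (X 2)) = ζ := hΨ 2
  have hΨw : Ψ (β (X 3)) = ω := hΨ 3
  have hΨs : Ψ (β (X 2) + β (X 0) * β (X 3)) = α (X 2) := by
    rw [map_add, map_mul, hΨx, hΨz, hΨw, ← hω]
    ring
  have hΦζ : Φ ζ = β (X 2) := by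
    rw [hζ, map_add, map_mul, map_pow, map_aeval_pair, hΦx, hΦz, hΦw, ← hw']
    ring
  have hΨy' : Ψ y' = α (X 1) := by
    refine hxA ?_
    change α (X 0) * Ψ y' = α (X 0) * α (X 1)
    rw [hrelA, ← hΨs, Polynomial.aeval_algHom_apply, hy', map_mul, hΨx]
  have hΨw' : Ψ w' = α (X 3) := by
    refine hxnA ?_
    change α (X 0) ^ n * Ψ w' = α (X 0) ^ n * α (X 3)
    rw [← hΨx, ← map_pow, ← map_mul, ← hw', map_sub, map_aeval_pair, hΨs, hΨz, hΨx, hζ, map_pow,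
      hΨx]
    ring
  have hΦω : Φ ω = β (X 3) := by
    refine hxB ?_
    change β (X 0) * Φ ω = β (X 0) * β (X 3)
    rw [← hΦx, ← map_mul, ← hω, map_sub, hΦz, hΦζ, hΦx]
    ring
  have hΦη : Φ η = β (X 1) := by
    refine hxnB ?_
    change β (X 0) ^ n * Φ η = β (X 0) ^ n * β (X 1)
    rw [hrelB, ← hΦζ, ← hΦx, ← map_aeval_pair, hη, map_mul, map_pow]
  refine ⟨AlgEquiv.ofAlgHom Φ Ψ (hextB _ _ fun i => ?_) (hextA _ _ fun i => ?_),
    hΦx, hΦz, ?_, ?_⟩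
  · change Φ (Ψ (β (X i))) = β (X i)
    fin_cases i
    · exact (congrArg Φ hΨx).trans hΦx
    · exact (congrArg Φ hΨy).trans hΦη
    · exact (congrArg Φ hΨz).trans hΦζ
    · exact (congrArg Φ hΨw).trans hΦω
  · change Ψ (Φ (α (X i))) = α (X i)
    fin_cases i
    · exact (congrArg Ψ hΦx).trans hΨx
    · exact (congrArg Ψ hΦy).trans hΨy'
    · exact (congrArg Ψ hΦz).trans hΨs
    · exact (congrArg Ψ hΦw).trans hΨw'
  · change β (X 0) * Φ (α (X 1)) = _
    rw [hΦy, hy']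
  · change β (X 0) ^ n * Φ (α (X 3)) = _
    rw [hΦw, hw']
end

section
/- Let n ≥ 1 and let Q(x,z) ∈ ℂ[x,z] be such that Q(0,z) ∈ ℂ[z] has degree d ≥ 2 and only simple roots. Let P ∈ ℂ[z] be any monic polynomial of degree d with only simple roots. Then the ℂ-algebras ℂ[X,Y,Z,W]/(X^n Y − Q(X,Z)) and ℂ[X,Y,Z,W]/(XY − P(Z)) are isomorphic; that is, the cylinder over the Danielewski hypersurface x^n y = Q(x,z) is isomorphic to the cylinder over the classical Danielewski surface x y = P(z). -/
open MvPolynomial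

namespace Polynomial

/-- A squarefree complex polynomial divides every polynomial vanishing at its roots. -/
theorem dvd_of_squarefree_of_forall_eval_eq_zero {p f : Polynomial ℂ} (hp : Squarefree p)
    (h : ∀ r, p.eval r = 0 → f.eval r = 0) : p ∣ f := by
  rcases eq_or_ne f 0 with rfl | hf
  · exact dvd_zero p
  refine (IsAlgClosed.splits p).dvd_of_roots_le_roots hp.ne_zero ?_
  have hnodup : p.roots.Nodup :=
    nodup_roots (PerfectField.separable_iff_squarefree.mpr hp)
  refine (Multiset.le_iff_subset hnodup).mpr fun r hr ↦ ?_
  exact (mem_roots hf).mpr (h r ((mem_roots hp.ne_zero).mp hr))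

/-- Polynomials realizing mutually inverse bijections between the roots of two squarefree complex
polynomials of the same degree. -/
theorem exists_interpolation_of_squarefree {p q : Polynomial ℂ} (hp : Squarefree p)
    (hq : Squarefree q) (hdeg : p.natDegree = q.natDegree) :
    ∃ g h : Polynomial ℂ, q ∣ p.comp g ∧ p ∣ q.comp h ∧ p ∣ X - g.comp h ∧ q ∣ X - h.comp g := by
  have hcard : ∀ {f : Polynomial ℂ}, Squarefree f → f.roots.toFinset.card = f.natDegree := by
    intro f hf
    rw [Multiset.toFinset_card_of_nodup
      (nodup_roots (PerfectField.separable_iff_squarefree.mpr hf)),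
      ← (IsAlgClosed.splits _).natDegree_eq_card_roots]
  let e : p.roots.toFinset ≃ q.roots.toFinset :=
    Finset.equivOfCardEq (by rw [hcard hp, hcard hq, hdeg])
  have hmem : ∀ {f : Polynomial ℂ}, Squarefree f → ∀ {r}, r ∈ f.roots.toFinset ↔ f.eval r = 0 :=
    fun hf r ↦ by rw [Multiset.mem_toFinset, mem_roots hf.ne_zero, IsRoot.def]
  have hinterp : ∀ {s t : Finset ℂ} (u : s → t), ∃ f : Polynomial ℂ,
      ∀ r : s, f.eval (r : ℂ) = u r := by
    intro s t u
    refine ⟨Lagrange.interpolate Finset.univ (fun r : s ↦ (r : ℂ)) fun r ↦ u r, fun r ↦ ?_⟩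
    exact Lagrange.eval_interpolate_at_node _ (Subtype.val_injective.injOn) (Finset.mem_univ r)
  obtain ⟨g, hg⟩ := hinterp e.symm
  obtain ⟨h, hh⟩ := hinterp e
  refine ⟨g, h, ?_, ?_, ?_, ?_⟩
  · refine dvd_of_squarefree_of_forall_eval_eq_zero hq fun r hr ↦ ?_
    rw [eval_comp, hg ⟨r, (hmem hq).mpr hr⟩]
    exact (hmem hp).mp (Subtype.prop _)
  · refine dvd_of_squarefree_of_forall_eval_eq_zero hp fun r hr ↦ ?_
    rw [eval_comp, hh ⟨r, (hmem hp).mpr hr⟩]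
    exact (hmem hq).mp (Subtype.prop _)
  · refine dvd_of_squarefree_of_forall_eval_eq_zero hp fun r hr ↦ ?_
    rw [eval_sub, eval_X, eval_comp, hh ⟨r, (hmem hp).mpr hr⟩, hg, e.symm_apply_apply, sub_self]
  · refine dvd_of_squarefree_of_forall_eval_eq_zero hq fun r hr ↦ ?_
    rw [eval_sub, eval_X, eval_comp, hg ⟨r, (hmem hq).mpr hr⟩, hh, e.apply_symm_apply, sub_self]

section Hensel

variable {R : Type*} [CommRing R]

/-- Existence in Hensel's lemma: a simple root modulo `x` lifts to a root modulo `x ^ n`. -/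
theorem exists_pow_dvd_eval_of_dvd_eval (f : Polynomial R) {x a c : R} (ha : x ∣ f.eval a)
    (hc : x ∣ c * f.derivative.eval a - 1) (n : ℕ) :
    ∃ r, x ∣ r - a ∧ x ^ n ∣ f.eval r := by
  suffices H : ∃ r, x ∣ r - a ∧ x ^ (n + 1) ∣ f.eval r by
    obtain ⟨r, hr, hr'⟩ := H
    exact ⟨r, hr, (pow_dvd_pow x n.le_succ).trans hr'⟩
  induction n with
  | zero => exact ⟨a, by simp, by simpa using ha⟩
  | succ n ih =>
    obtain ⟨r, hra, u, hu⟩ := ih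
    obtain ⟨k, hk⟩ := f.binomExpansion r (-(c * f.eval r))
    obtain ⟨s, hs⟩ := hc
    obtain ⟨t, ht⟩ := hra.trans (sub_dvd_eval_sub r a f.derivative)
    refine ⟨r + -(c * f.eval r), ?_, ?_⟩
    · obtain ⟨v, hv⟩ := hra
      exact ⟨v - c * (x ^ n * u), by rw [hu]; linear_combination hv⟩
    · refine ⟨-u * (s + c * t) + k * c ^ 2 * u ^ 2 * x ^ n, ?_⟩
      rw [hk, hu]
      linear_combination (-x ^ (n + 1) * u) * hs - (x ^ (n + 1) * u * c) * ht

/-- Uniqueness in Hensel's lemma. -/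
theorem pow_dvd_sub_of_pow_dvd_eval (f : Polynomial R) {x a b c : R} {n : ℕ} (hab : x ∣ a - b)
    (hc : x ∣ c * f.derivative.eval a - 1) (ha : x ^ n ∣ f.eval a) (hb : x ^ n ∣ f.eval b) :
    x ^ n ∣ a - b := by
  obtain ⟨k, hk⟩ := f.binomExpansion a (b - a)
  obtain ⟨s, hs⟩ := hc
  obtain ⟨t, ht⟩ := hab
  rw [add_sub_cancel] at hk
  have hcop : IsCoprime (x ^ n) (1 + x * (s - c * k * t)) :=
    IsCoprime.pow_left ⟨-(s - c * k * t), 1, by ring⟩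
  refine hcop.dvd_of_dvd_mul_right ?_
  have heq : (a - b) * (1 + x * (s - c * k * t)) = c * (f.eval a - f.eval b) := by
    linear_combination c * hk - (a - b) * hs + (a - b) * c * k * ht
  rw [heq]
  exact (dvd_sub ha hb).mul_left c

end Hensel

theorem dvd_aeval_sub_aeval {R : Type*} [CommRing R] [Algebra ℂ R] (p : Polynomial ℂ) {x a b : R}
    (h : x ∣ a - b) : x ∣ aeval a p - aeval b p := by
  rw [← eval_map_algebraMap, ← eval_map_algebraMap]
  exact h.trans (sub_dvd_eval_sub a b _)

theorem dvd_aeval_of_dvd {R : Type*} [CommRing R] [Algebra ℂ R] {p f : Polynomial ℂ} {x a : R}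
    (h : x ∣ aeval a p) (hpf : p ∣ f) : x ∣ aeval a f :=
  h.trans (_root_.map_dvd (aeval a) hpf)

end Polynomial

namespace Danielewski

variable {R : Type} [CommRing R] [Algebra ℂ R]

/-- The specialization `Q(0, z)`. -/
noncomputable abbrev fiberPoly (Q : MvPolynomial (Fin 2) ℂ) : Polynomial ℂ :=
  aeval ![(0 : Polynomial ℂ), Polynomial.X] Q

/-- `Q(x, T)` as a polynomial in `T` over a ring containing `x`. -/
noncomputable def atX (Q : MvPolynomial (Fin 2) ℂ) (x : R) : Polynomial R :=
  aeval ![Polynomial.C x, Polynomial.X] Q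

theorem eval_atX (Q : MvPolynomial (Fin 2) ℂ) (x a : R) :
    (atX Q x).eval a = aeval ![x, a] Q := by
  have h : ((Polynomial.aeval a).restrictScalars ℂ).comp (aeval ![Polynomial.C x, Polynomial.X])
      = aeval ![x, a] := by
    ext i
    fin_cases i <;> simp
  simpa [atX] using DFunLike.congr_fun h Q

theorem map_atX_mk_span (Q : MvPolynomial (Fin 2) ℂ) (x : R) :
    (atX Q x).map (Ideal.Quotient.mk (Ideal.span {x})) =
      (fiberPoly Q).map (algebraMap ℂ (R ⧸ Ideal.span {x})) := by
  have hx : Ideal.Quotient.mk (Ideal.span {x}) x = 0 :=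
    Ideal.Quotient.eq_zero_iff_mem.mpr (Ideal.mem_span_singleton_self x)
  have h : (Polynomial.mapAlgHom (Ideal.Quotient.mkₐ ℂ (Ideal.span {x}))).comp
        (aeval ![Polynomial.C x, Polynomial.X]) =
      (Polynomial.mapAlgHom (Algebra.ofId ℂ (R ⧸ Ideal.span {x}))).comp
        (aeval ![(0 : Polynomial ℂ), Polynomial.X]) := by
    ext i : 1
    fin_cases i <;> simp [hx]
  exact DFunLike.congr_fun h Q

theorem dvd_sub_of_map_eq {f : Polynomial R} {q : Polynomial ℂ} {x : R}
    (h : f.map (Ideal.Quotient.mk (Ideal.span {x})) =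
      q.map (algebraMap ℂ (R ⧸ Ideal.span {x}))) (a : R) :
    x ∣ f.eval a - Polynomial.aeval a q := by
  rw [← Ideal.mem_span_singleton, ← Ideal.Quotient.eq, ← Polynomial.eval_map_apply, h,
    Polynomial.eval_map_algebraMap, ← Ideal.Quotient.mkₐ_eq_mk ℂ, Polynomial.aeval_algHom_apply]

theorem dvd_aeval_sub_fiberPoly (Q : MvPolynomial (Fin 2) ℂ) (x a : R) :
    x ∣ aeval ![x, a] Q - Polynomial.aeval a (fiberPoly Q) := by
  rw [← eval_atX]
  exact dvd_sub_of_map_eq (map_atX_mk_span Q x) a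

theorem exists_dvd_mul_derivative_atX_sub_one {Q : MvPolynomial (Fin 2) ℂ}
    (hQ : (fiberPoly Q).Separable) {x a : R} (ha : x ∣ Polynomial.aeval a (fiberPoly Q)) :
    ∃ c, x ∣ c * (atX Q x).derivative.eval a - 1 := by
  obtain ⟨u, v, huv⟩ := hQ
  have hder : x ∣ (atX Q x).derivative.eval a -
      Polynomial.aeval a (fiberPoly Q).derivative := by
    refine dvd_sub_of_map_eq ?_ a
    rw [← Polynomial.derivative_map, map_atX_mk_span, Polynomial.derivative_map]
  have h := congrArg (Polynomial.aeval a) huv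
  rw [map_add, map_mul, map_mul, map_one] at h
  refine ⟨Polynomial.aeval a v, ?_⟩
  have heq : Polynomial.aeval a v * (atX Q x).derivative.eval a - 1 =
      Polynomial.aeval a v * ((atX Q x).derivative.eval a -
        Polynomial.aeval a (fiberPoly Q).derivative) -
      Polynomial.aeval a u * Polynomial.aeval a (fiberPoly Q) := by
    linear_combination h
  rw [heq]
  exact dvd_sub (hder.mul_left _) (ha.mul_left _)

/-- A root of `Q(0, z)` modulo `x` lifts to a root of `Q(x, z)` modulo `x ^ n`. -/
theorem exists_pow_dvd_aeval {Q : MvPolynomial (Fin 2) ℂ} (hQ : (fiberPoly Q).Separable)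
    {x a : R} (ha : x ∣ Polynomial.aeval a (fiberPoly Q)) (n : ℕ) :
    ∃ r, x ∣ r - a ∧ x ^ n ∣ aeval ![x, r] Q := by
  obtain ⟨c, hc⟩ := exists_dvd_mul_derivative_atX_sub_one hQ ha
  simp_rw [← eval_atX]
  refine Polynomial.exists_pow_dvd_eval_of_dvd_eval _ ?_ hc n
  rw [eval_atX]
  exact (dvd_iff_dvd_of_dvd_sub (dvd_aeval_sub_fiberPoly Q x a)).mpr ha

/-- Roots of `Q(x, z)` modulo `x ^ n` that agree modulo `x` agree modulo `x ^ n`. -/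
theorem pow_dvd_sub_of_pow_dvd_aeval {Q : MvPolynomial (Fin 2) ℂ} (hQ : (fiberPoly Q).Separable)
    {x a b : R} {n : ℕ} (ha : x ∣ Polynomial.aeval a (fiberPoly Q)) (hab : x ∣ a - b)
    (hQa : x ^ n ∣ aeval ![x, a] Q) (hQb : x ^ n ∣ aeval ![x, b] Q) : x ^ n ∣ a - b := by
  obtain ⟨c, hc⟩ := exists_dvd_mul_derivative_atX_sub_one hQ ha
  rw [← eval_atX] at hQa hQb
  exact Polynomial.pow_dvd_sub_of_pow_dvd_eval _ hab hc hQa hQb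

theorem pow_dvd_aeval_add_mul {Q : MvPolynomial (Fin 2) ℂ} {x a : R} {n : ℕ}
    (h : x ^ n ∣ aeval ![x, a] Q) (b : R) : x ^ n ∣ aeval ![x, a + x ^ n * b] Q := by
  rw [← eval_atX] at h ⊢
  refine (dvd_iff_dvd_of_dvd_sub (dvd_trans ?_ (Polynomial.sub_dvd_eval_sub _ a _))).mpr h
  simp

theorem map_aeval_pair {S : Type} [CommRing S] [Algebra ℂ S] (φ : R →ₐ[ℂ] S)
    (Q : MvPolynomial (Fin 2) ℂ) (x z : R) :
    φ (aeval ![x, z] Q) = aeval ![φ x, φ z] Q := by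
  have h : φ.comp (aeval ![x, z]) = aeval ![φ x, φ z] := by
    ext i
    fin_cases i <;> simp
  exact DFunLike.congr_fun h Q

/-- `x, y, z, w` present the algebra `A` as the coordinate ring of the cylinder over
`x ^ n * y = Q(x, z)`, and `x` is not a zero divisor. -/
structure IsCylinder (n : ℕ) (Q : MvPolynomial (Fin 2) ℂ) {A : Type} [CommRing A] [Algebra ℂ A]
    (x y z w : A) : Prop where
  rel : x ^ n * y = aeval ![x, z] Q
  isLeftRegular : IsLeftRegular x
  exists_lift : ∀ {S : Type} [CommRing S] [Algebra ℂ S] (x' y' z' w' : S),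
    x' ^ n * y' = aeval ![x', z'] Q →
      ∃ φ : A →ₐ[ℂ] S, φ x = x' ∧ φ y = y' ∧ φ z = z' ∧ φ w = w'
  eq_id : ∀ φ : A →ₐ[ℂ] A, φ x = x → φ y = y → φ z = z → φ w = w → φ = AlgHom.id ℂ A

theorem aeval_pair_aeval_X_one (P : Polynomial ℂ) (x z : R) :
    aeval ![x, z] (Polynomial.aeval (X 1 : MvPolynomial (Fin 2) ℂ) P) =
      Polynomial.aeval z P := by
  rw [← Polynomial.aeval_algHom_apply]
  simp

theorem isCylinder_DHCylRing {n : ℕ} (hn : n ≠ 0) {Q : MvPolynomial (Fin 2) ℂ}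
    (hQ : fiberPoly Q ≠ 0) :
    IsCylinder n Q (A := DHCylRing n Q) (Ideal.Quotient.mk _ (X 0)) (Ideal.Quotient.mk _ (X 1))
      (Ideal.Quotient.mk _ (X 2)) (Ideal.Quotient.mk _ (X 3)) where
  rel := by
    have h := map_aeval_pair (Ideal.Quotient.mkₐ ℂ (Ideal.span
      {(X 0 : MvPolynomial (Fin 4) ℂ) ^ n * X 1 - aeval ![X 0, X 2] Q})) Q (X 0) (X 2)
    simp only [Ideal.Quotient.mkₐ_eq_mk] at h
    rw [← h, ← map_pow, ← map_mul, Ideal.Quotient.eq]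
    exact Ideal.mem_span_singleton_self _
  isLeftRegular := by
    refine isLeftRegular_of_non_zero_divisor _ fun a ha ↦ ?_
    obtain ⟨f, rfl⟩ := Ideal.Quotient.mk_surjective a
    rw [← map_mul, Ideal.Quotient.eq_zero_iff_mem, Ideal.mem_span_singleton] at ha
    rw [Ideal.Quotient.eq_zero_iff_mem, Ideal.mem_span_singleton]
    obtain ⟨k, hk⟩ := ha
    have hX : Prime (X 0 : MvPolynomial (Fin 4) ℂ) := X_prime
    rcases hX.dvd_or_dvd ⟨f, hk.symm⟩ with h | ⟨k', rfl⟩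
    · refine absurd ?_ hQ
      have h' := map_dvd (aeval (![0, 0, Polynomial.X, 0] : Fin 4 → Polynomial ℂ)) h
      rw [map_sub, map_aeval_pair] at h'
      simpa [hn] using h'
    · exact ⟨k', mul_left_cancel₀ hX.ne_zero (by rw [hk]; ring)⟩
  exists_lift {S} _ _ x' y' z' w' h := by
    refine ⟨Ideal.Quotient.liftₐ _ (aeval ![x', y', z', w']) fun a ha ↦ ?_, ?_, ?_, ?_, ?_⟩
    · obtain ⟨k, rfl⟩ := Ideal.mem_span_singleton.mp ha
      rw [map_mul, map_sub, map_aeval_pair]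
      simp [h]
    all_goals
      exact (aeval_X _ _).trans (by simp)
  eq_id φ hx hy hz hw := by
    refine Ideal.Quotient.algHom_ext _ (MvPolynomial.algHom_ext fun i ↦ ?_)
    fin_cases i <;> simpa

theorem IsCylinder.nonempty_algEquiv {A B : Type} [CommRing A] [Algebra ℂ A] [CommRing B]
    [Algebra ℂ B] {n : ℕ} (hn : n ≠ 0) {Q : MvPolynomial (Fin 2) ℂ} {P : Polynomial ℂ}
    {xA yA zA wA : A} {xB yB zB wB : B} (hA : IsCylinder n Q xA yA zA wA)
    (hB : IsCylinder 1 (Polynomial.aeval (X 1) P) xB yB zB wB)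
    (hQ : Squarefree (fiberPoly Q)) (hP : Squarefree P)
    (hdeg : P.natDegree = (fiberPoly Q).natDegree) : Nonempty (A ≃ₐ[ℂ] B) := by
  obtain ⟨g, h, hqPg, hPqh, hPgh, hqhg⟩ :=
    Polynomial.exists_interpolation_of_squarefree hP hQ hdeg
  have hsep : (fiberPoly Q).Separable := PerfectField.separable_iff_squarefree.mpr hQ
  have relB : xB * yB = Polynomial.aeval zB P := by
    rw [← aeval_pair_aeval_X_one P xB, ← hB.rel, pow_one]
  have dvdA : xA ∣ Polynomial.aeval zA (fiberPoly Q) := by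
    refine (dvd_iff_dvd_of_dvd_sub (dvd_aeval_sub_fiberPoly Q xA zA)).mp ?_
    rw [← hA.rel]
    exact (dvd_pow_self xA hn).mul_right yA
  have dvdB : xB ∣ Polynomial.aeval zB P := ⟨yB, relB.symm⟩
  -- The approximate root is taken in `ℂ[x, y, z]`, so that it does not involve `w`.
  obtain ⟨η, hηS, hη, hQη⟩ : ∃ η ∈ Algebra.adjoin ℂ {xB, yB, zB},
      xB ∣ η - Polynomial.aeval zB h ∧ xB ^ n ∣ aeval ![xB, η] Q := by
    let S := Algebra.adjoin ℂ {xB, yB, zB}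
    let x : S := ⟨xB, Algebra.subset_adjoin (by simp)⟩
    let y : S := ⟨yB, Algebra.subset_adjoin (by simp)⟩
    let z : S := ⟨zB, Algebra.subset_adjoin (by simp)⟩
    have hz : x ∣ Polynomial.aeval z P :=
      ⟨y, Subtype.ext (by simpa [x, y, z] using relB.symm)⟩
    obtain ⟨r, hr, hQr⟩ := exists_pow_dvd_aeval hsep (a := Polynomial.aeval z h) (x := x)
      (by rw [← Polynomial.aeval_comp]; exact Polynomial.dvd_aeval_of_dvd hz hPqh) n
    refine ⟨r, r.2, ?_, ?_⟩
    · simpa [x, z] using map_dvd S.val hr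
    · simpa [x, map_aeval_pair] using map_dvd S.val hQr
  -- The homomorphism from `A` to `B`.
  set ζ := η + xB ^ n * wB with hζ
  obtain ⟨y₁, hy₁⟩ : xB ^ n ∣ aeval ![xB, ζ] Q := pow_dvd_aeval_add_mul hQη wB
  obtain ⟨w₁, hw₁⟩ : xB ∣ zB - Polynomial.aeval ζ g := by
    have h₁ : xB ∣ Polynomial.aeval zB h - ζ := by
      have heq : Polynomial.aeval zB h - ζ = -(η - Polynomial.aeval zB h) - xB ^ n * wB := by
        rw [hζ]; ring
      rw [heq]
      exact dvd_sub (hη.neg_right) ((dvd_pow_self xB hn).mul_right wB)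
    have h₂ := dvd_add (Polynomial.dvd_aeval_of_dvd dvdB hPgh)
      (Polynomial.dvd_aeval_sub_aeval g h₁)
    simpa [Polynomial.aeval_comp] using h₂
  obtain ⟨ψ, hψx, hψy, hψz, hψw⟩ := hA.exists_lift xB y₁ ζ w₁ hy₁.symm
  -- The homomorphism from `B` to `A`.
  set ζ' := Polynomial.aeval zA g + xA * wA with hζ'
  have hζ'g : xA ∣ ζ' - Polynomial.aeval zA g := ⟨wA, by rw [hζ']; ring⟩
  obtain ⟨y₂, hy₂⟩ : xA ∣ Polynomial.aeval ζ' P := by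
    refine (dvd_iff_dvd_of_dvd_sub (Polynomial.dvd_aeval_sub_aeval P hζ'g)).mpr ?_
    rw [← Polynomial.aeval_comp]
    exact Polynomial.dvd_aeval_of_dvd dvdA hqPg
  have rel₂ : xA ^ 1 * y₂ =
      aeval ![xA, ζ'] (Polynomial.aeval (X 1 : MvPolynomial (Fin 2) ℂ) P) := by
    rw [aeval_pair_aeval_X_one, pow_one, hy₂]
  obtain ⟨φ₀, hφ₀x, hφ₀y, hφ₀z, -⟩ := hB.exists_lift xA y₂ ζ' 0 rel₂
  obtain ⟨v, hv⟩ : xA ^ n ∣ zA - φ₀ η := by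
    refine pow_dvd_sub_of_pow_dvd_aeval hsep dvdA ?_ ⟨yA, hA.rel.symm⟩ ?_
    · have h₁ := map_dvd φ₀ hη
      rw [map_sub, ← Polynomial.aeval_algHom_apply, hφ₀x, hφ₀z] at h₁
      have h₂ := dvd_sub (dvd_sub (Polynomial.dvd_aeval_of_dvd dvdA hqhg) h₁)
        (Polynomial.dvd_aeval_sub_aeval h hζ'g)
      rw [map_sub, Polynomial.aeval_X, Polynomial.aeval_comp] at h₂
      convert h₂ using 1
      ring
    · simpa [map_aeval_pair, hφ₀x] using map_dvd φ₀ hQη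
  obtain ⟨φ, hφx, hφy, hφz, hφw⟩ := hB.exists_lift xA y₂ ζ' v rel₂
  have hφη : φ η = φ₀ η := by
    refine AlgHom.adjoin_le_equalizer φ φ₀ ?_ hηS
    rintro b (rfl | rfl | rfl)
    exacts [hφx.trans hφ₀x.symm, hφy.trans hφ₀y.symm, hφz.trans hφ₀z.symm]
  have hφζ : φ ζ = zA := by
    rw [hζ, map_add, map_mul, map_pow, hφη, hφx, hφw, ← hv]; ring
  have hψζ' : ψ ζ' = zB := by
    rw [hζ', map_add, map_mul, ← Polynomial.aeval_algHom_apply, hψx, hψz, hψw, ← hw₁]; ring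
  have hψy₂ : ψ y₂ = yB := by
    refine hB.isLeftRegular ?_
    change xB * ψ y₂ = xB * yB
    rw [relB, ← hψx, ← map_mul, ← hy₂, ← Polynomial.aeval_algHom_apply, hψζ']
  refine ⟨AlgEquiv.ofAlgHom ψ φ (hB.eq_id _ ?_ ?_ ?_ ?_) (hA.eq_id _ ?_ ?_ ?_ ?_)⟩
  · simp [hφx, hψx]
  · simp [hφy, hψy₂]
  · simp [hφz, hψζ']
  · have hfix : ψ (φ η) = η := by
      refine AlgHom.adjoin_le_equalizer (ψ.comp φ) (AlgHom.id ℂ B) ?_ hηS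
      rintro b (rfl | rfl | rfl)
      · simp [hφx, hψx]
      · simp [hφy, hψy₂]
      · simp [hφz, hψζ']
    refine hB.isLeftRegular.pow n ?_
    change xB ^ n * ψ (φ wB) = xB ^ n * wB
    rw [hφw, ← hψx, ← map_pow, ← map_mul, ← hv, map_sub, ← hφη, hfix, hψz, map_pow, hψx, hζ]
    ring
  · simp [hφx, hψx]
  · refine hA.isLeftRegular.pow n ?_
    change xA ^ n * φ (ψ yA) = xA ^ n * yA
    rw [hψy, hA.rel, ← hφx, ← map_pow, ← map_mul, ← hy₁, map_aeval_pair, hφζ]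
  · simp [hψz, hφζ]
  · refine hA.isLeftRegular ?_
    change xA * φ (ψ wA) = xA * wA
    rw [hψw, ← hφx, ← map_mul, ← hw₁, map_sub, ← Polynomial.aeval_algHom_apply, hφζ, hφz, hφx, hζ']
    ring

end Danielewski

theorem cylinder_over_Danielewski_hypersurface_isomorphic_to_classical
    (n : ℕ) (hn : 1 ≤ n) (d : ℕ) (hd : 2 ≤ d)
    (Q : MvPolynomial (Fin 2) ℂ)
    -- Q(0,z) ∈ ℂ[z] has degree d and only simple roots
    (hQdeg : (MvPolynomial.aeval ![(0 : Polynomial ℂ), Polynomial.X] Q).natDegree = d)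
    (hQsf : Squarefree (MvPolynomial.aeval ![(0 : Polynomial ℂ), Polynomial.X] Q))
    (P : Polynomial ℂ)
    -- P is monic of degree d with only simple roots
    (hPmonic : P.Monic) (hPdeg : P.natDegree = d) (hPsf : Squarefree P) :
    Nonempty (DHCylRing n Q ≃ₐ[ℂ] WCylRing P) := by
  have hfib : Danielewski.fiberPoly (Polynomial.aeval (X 1 : MvPolynomial (Fin 2) ℂ) P) = P := by
    rw [Danielewski.fiberPoly, Danielewski.aeval_pair_aeval_X_one, Polynomial.aeval_X_left_apply]
  have hA := Danielewski.isCylinder_DHCylRing (Nat.one_le_iff_ne_zero.mp hn) hQsf.ne_zero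
  have hB := Danielewski.isCylinder_DHCylRing one_ne_zero (hfib.symm ▸ hPsf.ne_zero)
  obtain ⟨e⟩ := hA.nonempty_algEquiv (Nat.one_le_iff_ne_zero.mp hn) hB hQsf hPsf
    (hPdeg.trans hQdeg.symm)
  refine ⟨e.trans (Ideal.quotientEquivAlgOfEq ℂ ?_)⟩
  rw [Danielewski.aeval_pair_aeval_X_one, pow_one]
end

section
/- The ℂ-algebra endomorphism φ of ℂ[X,Y,Z,W] determined by X ↦ X, Y ↦ XY + 2ZW + XW², Z ↦ Z + XW, W ↦ (1/2)(YZ + 3ZW² + 3XYW + XW³) maps the ideal (XY − Z² + 1) into the ideal (X²Y − Z² + 1), and the ℂ-algebra endomorphism ψ of ℂ[X,Y,Z,W] determined by X ↦ X, Y ↦ X²W² + 2W·g(Z) + Y²((1/4)Z² − 1), Z ↦ X²W + g(Z), W ↦ −XW + (1/2)ZY, where g(Z) = Z − (Z² − 1)·(Z/2), maps the ideal (X²Y − Z² + 1) into the ideal (XY − Z² + 1). The induced ℂ-algebra homomorphisms Φ : ℂ[X,Y,Z,W]/(XY − Z² + 1) → ℂ[X,Y,Z,W]/(X²Y − Z²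 + 1) and Ψ : ℂ[X,Y,Z,W]/(X²Y − Z² + 1) → ℂ[X,Y,Z,W]/(XY − Z² + 1) are mutually inverse ℂ-algebra isomorphisms (Russell's isomorphism between the cylinders over xy = z² − 1 and x²y = z² − 1). -/
open MvPolynomial

/-- The polynomial ring `ℂ[X,Y,Z,W]` with `X 0 = X`, `X 1 = Y`, `X 2 = Z`, `X 3 = W`. -/
abbrev R4 : Type := MvPolynomial (Fin 4) ℂ

/-- The ℂ-algebra endomorphism φ of `ℂ[X,Y,Z,W]` given by
`X ↦ X`, `Y ↦ XY + 2ZW + XW²`, `Z ↦ Z + XW`, `W ↦ (1/2)(YZ + 3ZW² + 3XYW + XW³)`. -/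
noncomputable def russellPhi : R4 →ₐ[ℂ] R4 :=
  MvPolynomial.aeval
    ![X 0,
      X 0 * X 1 + 2 * X 2 * X 3 + X 0 * X 3 ^ 2,
      X 2 + X 0 * X 3,
      C (1 / 2 : ℂ) * (X 1 * X 2 + 3 * X 2 * X 3 ^ 2 + 3 * X 0 * X 1 * X 3 + X 0 * X 3 ^ 3)]

/-- `g(Z) = Z - (Z² - 1)·(Z/2)`. -/
noncomputable def russellg : R4 := X 2 - (X 2 ^ 2 - 1) * (C (1 / 2 : ℂ) * X 2)

/-- The ℂ-algebra endomorphism ψ of `ℂ[X,Y,Z,W]` given by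
`X ↦ X`, `Y ↦ X²W² + 2W·g(Z) + Y²((1/4)Z² − 1)`, `Z ↦ X²W + g(Z)`, `W ↦ −XW + (1/2)ZY`. -/
noncomputable def russellPsi : R4 →ₐ[ℂ] R4 :=
  MvPolynomial.aeval
    ![X 0,
      X 0 ^ 2 * X 3 ^ 2 + 2 * X 3 * russellg + X 1 ^ 2 * (C (1 / 4 : ℂ) * X 2 ^ 2 - 1),
      X 0 ^ 2 * X 3 + russellg,
      -(X 0 * X 3) + C (1 / 2 : ℂ) * X 2 * X 1]

/-- A cofactor witnessing membership in a principal ideal may be checked on complex values. -/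
theorem mem_span_singleton_of_eval_eq {f p : R4} (q : R4)
    (h : ∀ v : Fin 4 → ℂ, eval v p = eval v f * eval v q) :
    p ∈ Ideal.span {f} :=
  Ideal.mem_span_singleton.2 ⟨q, MvPolynomial.funext fun v => by rw [h, map_mul]⟩

theorem map_mem_span_singleton {f g : R4} (φ : R4 →ₐ[ℂ] R4) (h : φ f ∈ Ideal.span {g}) :
    ∀ p ∈ Ideal.span {f}, φ p ∈ Ideal.span {g} := by
  intro p hp
  obtain ⟨q, rfl⟩ := Ideal.mem_span_singleton.1 hp
  rw [map_mul]
  exact Ideal.mul_mem_right _ _ h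

/-- An endomorphism fixing the variables modulo `I` is the identity modulo `I`. -/
theorem mk_apply_eq_mk {I : Ideal R4} (φ : R4 →ₐ[ℂ] R4) (h : ∀ i, φ (X i) - X i ∈ I) (p : R4) :
    Ideal.Quotient.mk I (φ p) = Ideal.Quotient.mk I p := by
  have key : (Ideal.Quotient.mkₐ ℂ I).comp φ = Ideal.Quotient.mkₐ ℂ I :=
    MvPolynomial.algHom_ext fun i => Ideal.Quotient.eq.2 (h i)
  exact DFunLike.congr_fun key p

theorem russellPhi_relation :
    russellPhi (X 0 * X 1 - X 2 ^ 2 + 1) ∈ Ideal.span {(X 0 : R4) ^ 2 * X 1 - X 2 ^ 2 + 1} := by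
  refine mem_span_singleton_of_eval_eq 1 fun v => ?_
  simp [russellPhi]
  ring

theorem russellPsi_relation :
    russellPsi (X 0 ^ 2 * X 1 - X 2 ^ 2 + 1) ∈ Ideal.span {(X 0 : R4) * X 1 - X 2 ^ 2 + 1} := by
  refine mem_span_singleton_of_eval_eq
    ((X 0 * X 1 + X 2 ^ 2 - 1) * (C (1 / 4) * X 2 ^ 2 - 1)) fun v => ?_
  simp [russellPsi, russellg]
  ring

theorem russellPsi_russellPhi_X (i : Fin 4) :
    (russellPsi.comp russellPhi) (X i) - X i ∈
      Ideal.span {(X 0 : R4) * X 1 - X 2 ^ 2 + 1} := by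
  fin_cases i
  · simp [russellPhi, russellPsi]
  · refine mem_span_singleton_of_eval_eq (C (1 / 2) * X 1 * X 2 ^ 2 - X 1) fun v => ?_
    simp [russellPhi, russellPsi, russellg, map_ofNat (bind₁ _)]
    ring
  · refine mem_span_singleton_of_eval_eq (C (1 / 2) * X 2) fun v => ?_
    simp [russellPhi, russellPsi, russellg]
    ring
  · refine mem_span_singleton_of_eval_eq
      (-X 3 + C (5 / 4) * X 2 ^ 2 * X 3 - C (1 / 4) * X 2 ^ 4 * X 3
        - C (3 / 4) * X 1 ^ 2 * X 2 + C (1 / 4) * X 1 ^ 2 * X 2 ^ 3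
        + X 0 * X 1 * X 3 - C (1 / 4) * X 0 * X 1 * X 2 ^ 2 * X 3) fun v => ?_
    simp [russellPhi, russellPsi, russellg, map_ofNat (bind₁ _)]
    ring

theorem russellPhi_russellPsi_X (i : Fin 4) :
    (russellPhi.comp russellPsi) (X i) - X i ∈
      Ideal.span {(X 0 : R4) ^ 2 * X 1 - X 2 ^ 2 + 1} := by
  fin_cases i
  · simp [russellPhi, russellPsi]
  · refine mem_span_singleton_of_eval_eq
      (C (1 / 2) * X 2 ^ 2 * X 3 ^ 2 - X 1 + C (1 / 2) * X 1 * X 2 ^ 2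
        + 2 * X 0 * X 2 * X 3 ^ 3 + 2 * X 0 * X 1 * X 2 * X 3
        + C (1 / 2) * X 0 ^ 2 * X 3 ^ 4 + C (5 / 2) * X 0 ^ 2 * X 1 * X 3 ^ 2) fun v => ?_
    simp [russellPhi, russellPsi, russellg, map_ofNat (bind₁ _)]
    ring
  · refine mem_span_singleton_of_eval_eq (C (1 / 2) * X 2 + C (3 / 2) * X 0 * X 3) fun v => ?_
    simp [russellPhi, russellPsi, russellg]
    ring
  · refine mem_span_singleton_of_eval_eq (-X 3) fun v => ?_
    simp [russellPhi, russellPsi]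
    ring

theorem russell_isomorphism :
    (∀ p ∈ Ideal.span {(X 0 : R4) * X 1 - X 2 ^ 2 + 1},
      russellPhi p ∈ Ideal.span {(X 0 : R4) ^ 2 * X 1 - X 2 ^ 2 + 1}) ∧
    (∀ p ∈ Ideal.span {(X 0 : R4) ^ 2 * X 1 - X 2 ^ 2 + 1},
      russellPsi p ∈ Ideal.span {(X 0 : R4) * X 1 - X 2 ^ 2 + 1}) ∧
    ∃ (Φ : (R4 ⧸ Ideal.span {(X 0 : R4) * X 1 - X 2 ^ 2 + 1}) →ₐ[ℂ]
           (R4 ⧸ Ideal.span {(X 0 : R4) ^ 2 * X 1 - X 2 ^ 2 + 1}))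
      (Ψ : (R4 ⧸ Ideal.span {(X 0 : R4) ^ 2 * X 1 - X 2 ^ 2 + 1}) →ₐ[ℂ]
           (R4 ⧸ Ideal.span {(X 0 : R4) * X 1 - X 2 ^ 2 + 1})),
      (∀ p : R4,
        Φ (Ideal.Quotient.mk (Ideal.span {(X 0 : R4) * X 1 - X 2 ^ 2 + 1}) p) =
          Ideal.Quotient.mk (Ideal.span {(X 0 : R4) ^ 2 * X 1 - X 2 ^ 2 + 1}) (russellPhi p)) ∧
      (∀ p : R4,
        Ψ (Ideal.Quotient.mk (Ideal.span {(X 0 : R4) ^ 2 * X 1 - X 2 ^ 2 + 1}) p) =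
          Ideal.Quotient.mk (Ideal.span {(X 0 : R4) * X 1 - X 2 ^ 2 + 1}) (russellPsi p)) ∧
      (∀ a, Ψ (Φ a) = a) ∧ (∀ b, Φ (Ψ b) = b) := by
  have hΦ := map_mem_span_singleton russellPhi russellPhi_relation
  have hΨ := map_mem_span_singleton russellPsi russellPsi_relation
  refine ⟨hΦ, hΨ, Ideal.quotientMapₐ _ russellPhi hΦ, Ideal.quotientMapₐ _ russellPsi hΨ,
    fun _ => rfl, fun _ => rfl, fun a => ?_, fun b => ?_⟩
  · obtain ⟨p, rfl⟩ := Ideal.Quotient.mk_surjective a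
    exact mk_apply_eq_mk _ russellPsi_russellPhi_X p
  · obtain ⟨p, rfl⟩ := Ideal.Quotient.mk_surjective b
    exact mk_apply_eq_mk _ russellPhi_russellPsi_X p
end

section
/- Let g(Z) = Z − (Z² − 1)·(Z/2) ∈ ℂ[Z]. The ℂ-algebra endomorphism of ℂ[X,Y,Z,W] determined by X ↦ X, Y ↦ X²W² + 2W·g(Z) + Y²((1/4)Z² − 1), Z ↦ X²W + g(Z), W ↦ −XW + (1/2)ZY sends the polynomial X²Y − Z² + 1 to an element of the ideal generated by XY − Z² + 1; hence it descends to a ℂ-algebra homomorphism ℂ[X,Y,Z,W]/(X²Y − Z² + 1) → ℂ[X,Y,Z,W]/(XY − Z² + 1). -/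
open MvPolynomial

/-- The image of `X²Y - Z² + 1` under ψ, factored through `XY - Z² + 1`. -/
theorem russellPsi_relation_eq :
    russellPsi ((X 0 : R4) ^ 2 * X 1 - X 2 ^ 2 + 1) =
      (X 0 * X 1 + (X 2 ^ 2 - 1)) * (C (1 / 4 : ℂ) * X 2 ^ 2 - 1) *
        (X 0 * X 1 - X 2 ^ 2 + 1) := by
  have two_mul_half : (2 : R4) * C (1 / 2 : ℂ) = 1 := by
    rw [← map_ofNat (C : ℂ →+* R4) 2, ← C_mul]
    norm_num
  have quarter_eq : (C (1 / 4 : ℂ) : R4) = C (1 / 2 : ℂ) ^ 2 := by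
    rw [← C_pow]
    norm_num
  simp only [russellPsi, russellg, map_add, map_sub, map_mul, map_pow, map_one, aeval_X,
    Matrix.cons_val, quarter_eq]
  generalize (C (1 / 2 : ℂ) : R4) = c at *
  grind

theorem russellPsi_maps_relation_and_descends :
    russellPsi ((X 0 : R4) ^ 2 * X 1 - X 2 ^ 2 + 1) ∈
      Ideal.span {(X 0 : R4) * X 1 - X 2 ^ 2 + 1} ∧
    ∃ Ψ : (R4 ⧸ Ideal.span {(X 0 : R4) ^ 2 * X 1 - X 2 ^ 2 + 1}) →ₐ[ℂ]
          (R4 ⧸ Ideal.span {(X 0 : R4) * X 1 - X 2 ^ 2 + 1}),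
      ∀ p : R4,
        Ψ (Ideal.Quotient.mk (Ideal.span {(X 0 : R4) ^ 2 * X 1 - X 2 ^ 2 + 1}) p) =
          Ideal.Quotient.mk (Ideal.span {(X 0 : R4) * X 1 - X 2 ^ 2 + 1}) (russellPsi p) := by
  have relation_mem : russellPsi ((X 0 : R4) ^ 2 * X 1 - X 2 ^ 2 + 1) ∈
      Ideal.span {(X 0 : R4) * X 1 - X 2 ^ 2 + 1} :=
    Ideal.mem_span_singleton'.mpr ⟨_, russellPsi_relation_eq.symm⟩
  refine ⟨relation_mem, Ideal.quotientMapₐ _ russellPsi ?_, fun p => rfl⟩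
  rw [Ideal.span_singleton_le_iff_mem]
  exact relation_mem
end

section
/- Let n, m, d ≥ 1 be integers, let b_1,…,b_d ∈ ℂ be pairwise distinct, let a_1,…,a_d ∈ ℂ, and set Q(z) = ∏_{i=1}^d (z − b_i). Suppose f, g ∈ ℂ[z] satisfy f(b_i) = a_i for all i, g(a_i) = b_i for all i, and g^{(k)}(a_i) = 0 for all i and all 1 ≤ k ≤ m−1. Then in the polynomial ring ℂ[X,Z,W], the polynomial Z − g(f(Z) + X^n W) belongs to the ideal generated by Q(Z) and X^m. -/
open MvPolynomial

theorem Polynomial.map_hasseDeriv {R S : Type*} [Semiring R] [Semiring S] (φ : R →+* S) (k : ℕ)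
    (p : Polynomial R) :
    (Polynomial.hasseDeriv k p).map φ = Polynomial.hasseDeriv k (p.map φ) := by
  ext j
  simp [Polynomial.hasseDeriv_coeff]

/-- Taylor's formula for the evaluation of a polynomial in an algebra. -/
theorem Polynomial.aeval_add_eq_sum_hasseDeriv {R A : Type*} [CommRing R] [CommRing A]
    [Algebra R A] (p : Polynomial R) (u v : A) :
    Polynomial.aeval (u + v) p =
      ∑ k ∈ Finset.range ((Polynomial.taylor u (p.map (algebraMap R A))).natDegree + 1),
        Polynomial.aeval u (Polynomial.hasseDeriv k p) * v ^ k := by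
  rw [← Polynomial.eval_map_algebraMap, add_comm, ← Polynomial.taylor_eval,
    Polynomial.eval_eq_sum_range]
  simp only [Polynomial.taylor_coeff, ← Polynomial.map_hasseDeriv,
    Polynomial.eval_map_algebraMap]

theorem Polynomial.prod_X_sub_C_dvd_of_eval_eq_zero {K ι : Type*} [Field K] [Fintype ι]
    {b : ι → K} (hb : Function.Injective b) {p : Polynomial K} (hp : ∀ i, p.eval (b i) = 0) :
    ∏ i, (Polynomial.X - Polynomial.C (b i)) ∣ p :=
  Fintype.prod_dvd_of_coprime (Polynomial.pairwise_coprime_X_sub_C hb)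
    fun i => Polynomial.dvd_iff_isRoot.mpr (hp i)

theorem Polynomial.eval_hasseDeriv_eq_zero {K : Type*} [Field K] [CharZero K] {p : Polynomial K}
    {k : ℕ} {x : K} (h : (Polynomial.derivative^[k] p).eval x = 0) :
    (Polynomial.hasseDeriv k p).eval x = 0 := by
  rw [← Polynomial.factorial_smul_hasseDeriv] at h
  simpa [Nat.factorial_ne_zero] using h

theorem slice_is_regular_membership (n m d : ℕ) (hn : 1 ≤ n) (hm : 1 ≤ m) (hd : 1 ≤ d)
    (b : Fin d → ℂ) (hb : Function.Injective b) (a : Fin d → ℂ)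
    (Q : Polynomial ℂ)
    (hQ : Q = ∏ i, (Polynomial.X - Polynomial.C (b i)))
    (f g : Polynomial ℂ)
    (hf : ∀ i, f.eval (b i) = a i)
    (hg0 : ∀ i, g.eval (a i) = b i)
    (hg1 : ∀ i, ∀ k, 1 ≤ k → k ≤ m - 1 → (Polynomial.derivative^[k] g).eval (a i) = 0) :
    -- in ℂ[X,Z,W] (with X = X 0, Z = X 1, W = X 2), the polynomial Z − g(f(Z) + Xⁿ·W)
    -- lies in the ideal (Q(Z), Xᵐ)
    (X 1 : MvPolynomial (Fin 3) ℂ) -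
        Polynomial.aeval
          (Polynomial.aeval (X 1 : MvPolynomial (Fin 3) ℂ) f + (X 0) ^ n * X 2) g ∈
      Ideal.span {Polynomial.aeval (X 1 : MvPolynomial (Fin 3) ℂ) Q,
        (X 0 : MvPolynomial (Fin 3) ℂ) ^ m} := by
  set Z : MvPolynomial (Fin 3) ℂ := X 1
  set I := Ideal.span {Polynomial.aeval Z Q, (X 0 : MvPolynomial (Fin 3) ℂ) ^ m}
  have mem_of_eval_eq_zero (p : Polynomial ℂ) (hp : ∀ i, p.eval (b i) = 0) :
      Polynomial.aeval Z p ∈ I := by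
    have hdvd : Q ∣ p := hQ ▸ Polynomial.prod_X_sub_C_dvd_of_eval_eq_zero hb hp
    exact I.mem_of_dvd (map_dvd (Polynomial.aeval Z) hdvd) (Ideal.subset_span (by simp))
  rw [Polynomial.aeval_add_eq_sum_hasseDeriv, Finset.sum_range_succ', ← sub_sub, sub_right_comm]
  refine I.sub_mem ?_ (I.sum_mem fun k _ => ?_)
  · have h := mem_of_eval_eq_zero (Polynomial.X - g.comp f) fun i => by
      simp [Polynomial.eval_comp, hf, hg0]
    simpa [Polynomial.aeval_comp] using h
  · rcases le_or_gt m (k + 1) with hk | hk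
    · refine I.mul_mem_left _ (I.mem_of_dvd ?_ (Ideal.subset_span (Set.mem_insert_of_mem _ rfl)))
      rw [mul_pow, ← pow_mul]
      exact (pow_dvd_pow _ (hk.trans (Nat.le_mul_of_pos_left _ hn))).mul_right _
    · refine I.mul_mem_right _ ?_
      rw [← Polynomial.aeval_comp]
      refine mem_of_eval_eq_zero _ fun i => ?_
      rw [Polynomial.eval_comp, hf]
      exact Polynomial.eval_hasseDeriv_eq_zero (hg1 i (k + 1) (by lia) (by lia))
end

section
/- Let n, m, d ≥ 1 be integers, let a_1,…,a_d ∈ ℂ be pairwise distinct, let b_1,…,b_d ∈ ℂ, and set P(z) = ∏_{i=1}^d (z − a_i) and Q(z) = ∏_{i=1}^d (z − b_i). Suppose g ∈ ℂ[z] satisfies g(a_i) = b_i for all i and g^{(k)}(a_i) = 0 for all i and all 1 ≤ k ≤ m−1. Then in the polynomial ring ℂ[X,Y,Z,W], the polynomial Q(g(Z) + X^m W) belongs to the ideal generated by X^m and X^n Y − P(Z). -/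
open MvPolynomial

/-- A polynomial whose first `m` derivatives (starting with the zeroth) vanish at `t` is divisible
by `(X - t) ^ m`. -/
theorem X_sub_C_pow_dvd_of_iterate_derivative_eval_eq_zero {K : Type*} [Field K] [CharZero K]
    (p : Polynomial K) (t : K) (m : ℕ)
    (h : ∀ k < m, (Polynomial.derivative^[k] p).eval t = 0) :
    (Polynomial.X - Polynomial.C t) ^ m ∣ p := by
  rcases eq_or_ne p 0 with rfl | hp
  · exact dvd_zero _
  rcases m with _ | m
  · simp
  rw [← Polynomial.le_rootMultiplicity_iff hp]
  exact Polynomial.lt_rootMultiplicity_of_isRoot_iterate_derivative hp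
    fun k hk => h k (Nat.lt_succ_of_le hk)

theorem Q_of_new_coordinate_membership (n m d : ℕ) (hn : 1 ≤ n) (hm : 1 ≤ m) (hd : 1 ≤ d)
    (a : Fin d → ℂ) (ha : Function.Injective a) (b : Fin d → ℂ)
    (P Q : Polynomial ℂ)
    (hP : P = ∏ i, (Polynomial.X - Polynomial.C (a i)))
    (hQ : Q = ∏ i, (Polynomial.X - Polynomial.C (b i)))
    (g : Polynomial ℂ)
    (hg0 : ∀ i, g.eval (a i) = b i)
    (hg1 : ∀ i, ∀ k, 1 ≤ k → k ≤ m - 1 → (Polynomial.derivative^[k] g).eval (a i) = 0) :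
    -- in ℂ[X,Y,Z,W] (with X = X 0, Y = X 1, Z = X 2, W = X 3), the polynomial
    -- Q(g(Z) + Xᵐ·W) lies in the ideal (Xᵐ, Xⁿ·Y − P(Z))
    Polynomial.aeval
        (Polynomial.aeval (X 2 : MvPolynomial (Fin 4) ℂ) g + (X 0) ^ m * X 3) Q ∈
      Ideal.span {(X 0 : MvPolynomial (Fin 4) ℂ) ^ m,
        (X 0 : MvPolynomial (Fin 4) ℂ) ^ n * X 1 -
          Polynomial.aeval (X 2 : MvPolynomial (Fin 4) ℂ) P} := by
  have hdvd : P ^ m ∣ Q.comp g := by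
    rw [hP, hQ, Polynomial.prod_comp, ← Finset.prod_pow]
    refine Finset.prod_dvd_prod_of_dvd _ _ fun i _ => ?_
    refine X_sub_C_pow_dvd_of_iterate_derivative_eval_eq_zero _ _ _ fun k hk => ?_
    rcases k with _ | k
    · simp [hg0]
    · simpa [Polynomial.iterate_derivative_sub, Function.iterate_succ_apply] using
        hg1 i (k + 1) (by omega) (by omega)
  set I := Ideal.span {(X 0 : MvPolynomial (Fin 4) ℂ) ^ m,
    (X 0 : MvPolynomial (Fin 4) ℂ) ^ n * X 1 -
      Polynomial.aeval (X 2 : MvPolynomial (Fin 4) ℂ) P}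
  have hX : (X 0 : MvPolynomial (Fin 4) ℂ) ^ m ∈ I := Ideal.subset_span (by simp)
  have hXY : (X 0 : MvPolynomial (Fin 4) ℂ) ^ n * X 1 -
      Polynomial.aeval (X 2 : MvPolynomial (Fin 4) ℂ) P ∈ I := Ideal.subset_span (by simp)
  have hPm : Polynomial.aeval (X 2 : MvPolynomial (Fin 4) ℂ) P ^ m ∈ I := by
    have hpow : ((X 0 : MvPolynomial (Fin 4) ℂ) ^ n * X 1) ^ m ∈ I := by
      rw [mul_pow, ← pow_mul, mul_comm n m, pow_mul]
      exact I.mul_mem_right _ (I.pow_mem_of_mem hX n hn)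
    exact (I.sub_mem_iff_right hpow).1 (I.mem_of_dvd (sub_dvd_pow_sub_pow _ _ m) hXY)
  have hQg : Polynomial.aeval (Polynomial.aeval (X 2 : MvPolynomial (Fin 4) ℂ) g) Q ∈ I := by
    rw [← Polynomial.aeval_comp]
    exact I.mem_of_dvd (by simpa using map_dvd (Polynomial.aeval (X 2)) hdvd) hPm
  refine (I.sub_mem_iff_left hQg).1 (I.mem_of_dvd ?_ hX)
  have hsub := Polynomial.sub_dvd_eval_sub
    (Polynomial.aeval (X 2 : MvPolynomial (Fin 4) ℂ) g + (X 0) ^ m * X 3)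
    (Polynomial.aeval (X 2 : MvPolynomial (Fin 4) ℂ) g) (Q.map (algebraMap ℂ _))
  rw [add_sub_cancel_left, Polynomial.eval_map_algebraMap, Polynomial.eval_map_algebraMap] at hsub
  exact (Dvd.intro _ rfl).trans hsub
end

section
/- Let n ≥ 1 and d ≥ 1 be integers, let r_1,…,r_d ∈ ℂ be pairwise distinct, and let σ_1,…,σ_d ∈ ℂ[x] be polynomials each of degree strictly less than n. Then there exists a polynomial g ∈ ℂ[x,t] such that for every 1 ≤ i ≤ d, the congruence g(x, r_i + x·t) ≡ σ_i(x) mod (x^n) holds in ℂ[x,t], i.e., g(x, r_i + x·t) − σ_i(x) belongs to the ideal of ℂ[x,t] generated by x^n. -/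
open MvPolynomial

/-- Linear polynomials `X k - a` and `X k - b` with `a ≠ b` are coprime. -/
theorem isCoprime_X_sub_C_of_ne {K ι : Type*} [Field K] (k : ι) {a b : K} (h : a ≠ b) :
    IsCoprime (X k - C a : MvPolynomial ι K) (X k - C b) := by
  refine ⟨C (b - a)⁻¹, -C (b - a)⁻¹, ?_⟩
  have hba : b - a ≠ 0 := sub_ne_zero.mpr h.symm
  calc C (b - a)⁻¹ * (X k - C a) + -C (b - a)⁻¹ * (X k - C b)
      = (C ((b - a)⁻¹ * (b - a)) : MvPolynomial ι K) := by rw [C_mul, C_sub]; ring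
    _ = 1 := by rw [inv_mul_cancel₀ hba, C_1]

theorem exists_interpolating_polynomial_mod_xn (n d : ℕ) (hn : 1 ≤ n) (hd : 1 ≤ d)
    (r : Fin d → ℂ) (hr : Function.Injective r)
    (σ : Fin d → Polynomial ℂ) (hσ : ∀ i, (σ i).degree < n) :
    -- there is g ∈ ℂ[x,t] (with x = X 0, t = X 1) such that, for every i,
    -- g(x, rᵢ + x·t) ≡ σᵢ(x) mod (xⁿ) in ℂ[x,t]
    ∃ g : MvPolynomial (Fin 2) ℂ, ∀ i,
      MvPolynomial.aeval ![(X 0 : MvPolynomial (Fin 2) ℂ), C (r i) + X 0 * X 1] g -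
          Polynomial.aeval (X 0 : MvPolynomial (Fin 2) ℂ) (σ i) ∈
        Ideal.span {(X 0 : MvPolynomial (Fin 2) ℂ) ^ n} := by
  obtain ⟨g, hg⟩ := Ideal.exists_forall_sub_mem_ideal
    (I := fun i => Ideal.span {(X 1 - C (r i) : MvPolynomial (Fin 2) ℂ) ^ n})
    (fun i j hij => (Ideal.isCoprime_span_singleton_iff _ _).mpr
      (isCoprime_X_sub_C_of_ne 1 (hr.ne hij)).pow)
    (fun i => Polynomial.aeval (X 0 : MvPolynomial (Fin 2) ℂ) (σ i))
  refine ⟨g, fun i => ?_⟩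
  obtain ⟨q, hq⟩ := Ideal.mem_span_singleton.mp (hg i)
  have hsubst := congrArg
    (MvPolynomial.aeval ![(X 0 : MvPolynomial (Fin 2) ℂ), C (r i) + X 0 * X 1]) hq
  simp only [map_sub, map_mul, map_pow, ← Polynomial.aeval_algHom_apply, aeval_X, algHom_C,
    Matrix.cons_val_zero, Matrix.cons_val_one, algebraMap_eq, add_sub_cancel_left,
    mul_pow, mul_assoc] at hsubst
  exact Ideal.mem_span_singleton.mpr ⟨_, hsubst⟩
end

section
/- Let P ∈ ℂ[z] and suppose there exist U, V ∈ ℂ[z] with U(z)P'(z) + V(z)P(z) = 1, where P' is the derivative of P. Set g(z) = z − P(z)U(z). Then g(r) = r and g'(r) = 0 for every root r of P, and P(z)² divides the composite polynomial P(g(z)) in ℂ[z]. -/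
theorem g_fixes_roots_and_P_sq_dvd_P_comp_g
    (P U V : Polynomial ℂ)
    (hUV : U * Polynomial.derivative P + V * P = 1)
    (g : Polynomial ℂ) (hg : g = Polynomial.X - P * U) :
    (∀ r : ℂ, P.eval r = 0 → g.eval r = r ∧ (Polynomial.derivative g).eval r = 0) ∧
    P ^ 2 ∣ P.comp g := by
  subst hg
  refine ⟨fun r hr => ⟨by simp [hr], ?_⟩, ?_⟩
  · have h := congrArg (Polynomial.eval r) hUV
    simp only [Polynomial.eval_add, Polynomial.eval_mul, hr, mul_zero, add_zero,
      Polynomial.eval_one] at h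
    simp only [Polynomial.derivative_sub, Polynomial.derivative_X, Polynomial.derivative_mul,
      Polynomial.eval_sub, Polynomial.eval_one, Polynomial.eval_add, Polynomial.eval_mul, hr]
    linear_combination -h
  · obtain ⟨k, hk⟩ := (P.map Polynomial.C).binomExpansion Polynomial.X (-(P * U))
    have comp_eq (q Q : Polynomial ℂ) : (Q.map Polynomial.C).eval q = Q.comp q :=
      Polynomial.eval_map _ _
    rw [← sub_eq_add_neg, Polynomial.derivative_map, comp_eq, comp_eq, comp_eq,
      Polynomial.comp_X, Polynomial.comp_X] at hk
    refine ⟨V + k * U ^ 2, ?_⟩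
    linear_combination hk - P * hUV
end

section
/- Let n ≥ 1 be an integer and P ∈ ℂ[z]. There exists a ℂ-linear derivation D on the quotient ring R = ℂ[X,Y,Z]/(X^n Y − P(Z)) satisfying D(x̄) = 0, D(z̄) = x̄^n, and D(ȳ) = P'(z̄), where x̄, ȳ, z̄ denote the residue classes of X, Y, Z and P' is the derivative of P; moreover D is locally nilpotent: for every a ∈ R there exists k ≥ 1 with D^k(a) = 0. -/
open MvPolynomial

/-- The coordinate ring `ℂ[X,Y,Z]/(Xⁿ·Y − P(Z))` of the classical Danielewski surface
`xⁿy = P(z)`.  Variables: `X 0 = X`, `X 1 = Y`, `X 2 = Z`. -/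
abbrev DSRing (n : ℕ) (P : Polynomial ℂ) : Type :=
  MvPolynomial (Fin 3) ℂ ⧸
    Ideal.span {(X 0 : MvPolynomial (Fin 3) ℂ) ^ n * X 1 - Polynomial.aeval (X 2) P}

noncomputable abbrev dsMk (n : ℕ) (P : Polynomial ℂ) :
    MvPolynomial (Fin 3) ℂ →+* DSRing n P :=
  Ideal.Quotient.mk _

/-- If `D^k a = 0` and `D^l b = 0`, then `D^N (a * b) = 0` for every `N ≥ k + l`. -/
theorem Derivation.iterate_mul_eq_zero {R A : Type*} [CommSemiring R] [CommSemiring A]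
    [Algebra R A] (D : Derivation R A A) {N k l : ℕ} (hN : k + l ≤ N) {a b : A}
    (ha : D^[k] a = 0) (hb : D^[l] b = 0) : D^[N] (a * b) = 0 := by
  induction N generalizing k l a b with
  | zero =>
    obtain rfl : k = 0 := by omega
    simp_all
  | succ N ih =>
    rcases k with _ | k
    · obtain rfl : a = 0 := ha
      rw [zero_mul, iterate_map_zero]
    rcases l with _ | l
    · obtain rfl : b = 0 := hb
      rw [mul_zero, iterate_map_zero]
    rw [Function.iterate_succ_apply, D.leibniz, smul_eq_mul, smul_eq_mul, iterate_map_add,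
      
      ih (k := k + 1) (l := l) (b := D b) (by omega) ha hb,
      ih (k := l + 1) (l := k) (b := D a) (by omega) hb ha, add_zero]

/-- The subalgebra of elements annihilated by some iterate of a derivation. -/
def Derivation.nilSubalgebra {R A : Type*} [CommSemiring R] [CommSemiring A]
    [Algebra R A] (D : Derivation R A A) : Subalgebra R A where
  carrier := {a | ∃ k : ℕ, D^[k] a = 0}
  mul_mem' := fun ⟨_, ha⟩ ⟨_, hb⟩ => ⟨_, D.iterate_mul_eq_zero le_rfl ha hb⟩
  add_mem' := by
    rintro a b ⟨k, ha⟩ ⟨l, hb⟩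
    refine ⟨k + l, ?_⟩
    rw [iterate_map_add, Function.iterate_add_apply _ k l b, hb, iterate_map_zero, add_comm k l,
      Function.iterate_add_apply, ha, iterate_map_zero, add_zero]
  algebraMap_mem' r := ⟨1, D.map_algebraMap r⟩

theorem Derivation.mem_nilSubalgebra_of_apply_mem {R A : Type*} [CommSemiring R]
    [CommSemiring A] [Algebra R A] {D : Derivation R A A} {a : A}
    (h : D a ∈ D.nilSubalgebra) : a ∈ D.nilSubalgebra := by
  obtain ⟨k, hk⟩ := h
  exact ⟨k + 1, hk⟩

/-- The derivation `Xⁿ ∂/∂Z + P'(Z) ∂/∂Y` of `ℂ[X,Y,Z]`. -/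
noncomputable def dsPolyDerivation (n : ℕ) (P : Polynomial ℂ) :
    Derivation ℂ (MvPolynomial (Fin 3) ℂ) (MvPolynomial (Fin 3) ℂ) :=
  mkDerivation ℂ ![0, Polynomial.aeval (X 2) (Polynomial.derivative P), X 0 ^ n]

theorem dsPolyDerivation_relation (n : ℕ) (P : Polynomial ℂ) :
    dsPolyDerivation n P (X 0 ^ n * X 1 - Polynomial.aeval (X 2) P) = 0 := by
  simp [dsPolyDerivation, Derivation.leibniz, Derivation.leibniz_pow, mkDerivation_X,
    Derivation.map_aeval, mul_comm]

theorem dsMk_dsPolyDerivation_eq_zero (n : ℕ) (P : Polynomial ℂ) (p : MvPolynomial (Fin 3) ℂ)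
    (hp : dsMk n P p = 0) : dsMk n P (dsPolyDerivation n P p) = 0 := by
  obtain ⟨q, rfl⟩ := Ideal.mem_span_singleton'.1 (Ideal.Quotient.eq_zero_iff_mem.1 hp)
  rw [Derivation.leibniz, dsPolyDerivation_relation, smul_zero, zero_add, smul_eq_mul, map_mul,
    Ideal.Quotient.eq_zero_iff_mem.2 (Ideal.mem_span_singleton_self _), zero_mul]

/-- The canonical derivation of the Danielewski surface `xⁿy = P(z)`. -/
noncomputable def dsDerivation (n : ℕ) (P : Polynomial ℂ) :
    Derivation ℂ (DSRing n P) (DSRing n P) :=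
  Derivation.liftOfSurjective (f := Ideal.Quotient.mkₐ ℂ _)
    (Ideal.Quotient.mkₐ_surjective ℂ _) (dsMk_dsPolyDerivation_eq_zero n P)

theorem dsDerivation_dsMk (n : ℕ) (P : Polynomial ℂ) (p : MvPolynomial (Fin 3) ℂ) :
    dsDerivation n P (dsMk n P p) = dsMk n P (dsPolyDerivation n P p) :=
  Derivation.liftOfSurjective_apply (f := Ideal.Quotient.mkₐ ℂ _)
    (Ideal.Quotient.mkₐ_surjective ℂ _) (dsMk_dsPolyDerivation_eq_zero n P) p

theorem dsDerivation_x (n : ℕ) (P : Polynomial ℂ) : dsDerivation n P (dsMk n P (X 0)) = 0 := by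
  rw [dsDerivation_dsMk]
  simp [dsPolyDerivation, mkDerivation_X]

theorem dsDerivation_z (n : ℕ) (P : Polynomial ℂ) :
    dsDerivation n P (dsMk n P (X 2)) = dsMk n P (X 0) ^ n := by
  rw [dsDerivation_dsMk]
  simp [dsPolyDerivation, mkDerivation_X]

theorem dsDerivation_y (n : ℕ) (P : Polynomial ℂ) :
    dsDerivation n P (dsMk n P (X 1)) =
      Polynomial.aeval (dsMk n P (X 2)) (Polynomial.derivative P) := by
  rw [dsDerivation_dsMk, dsPolyDerivation, mkDerivation_X]
  exact (Polynomial.aeval_algHom_apply (Ideal.Quotient.mkₐ ℂ _) _ _).symm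

theorem dsDerivation_mem_nilSubalgebra (n : ℕ) (P : Polynomial ℂ) (a : DSRing n P) :
    a ∈ (dsDerivation n P).nilSubalgebra := by
  have hx : dsMk n P (X 0) ∈ (dsDerivation n P).nilSubalgebra := ⟨1, dsDerivation_x n P⟩
  have hz : dsMk n P (X 2) ∈ (dsDerivation n P).nilSubalgebra :=
    Derivation.mem_nilSubalgebra_of_apply_mem (dsDerivation_z n P ▸ pow_mem hx n)
  have hy : dsMk n P (X 1) ∈ (dsDerivation n P).nilSubalgebra :=
    Derivation.mem_nilSubalgebra_of_apply_mem
      (dsDerivation_y n P ▸ Subalgebra.aeval_coe _ ⟨_, hz⟩ _ ▸ Subtype.property _)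
  obtain ⟨p, rfl⟩ := Ideal.Quotient.mk_surjective a
  induction p using MvPolynomial.induction_on with
  | C r => exact (dsDerivation n P).nilSubalgebra.algebraMap_mem r
  | add p q hp hq => rw [map_add]; exact add_mem hp hq
  | mul_X p i hp =>
    rw [map_mul]
    refine mul_mem hp ?_
    fin_cases i
    exacts [hx, hy, hz]

theorem canonical_locally_nilpotent_derivation (n : ℕ) (hn : 1 ≤ n) (P : Polynomial ℂ) :
    ∃ D : Derivation ℂ (DSRing n P) (DSRing n P),
      D (dsMk n P (X 0)) = 0 ∧
      D (dsMk n P (X 2)) = (dsMk n P (X 0)) ^ n ∧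
      D (dsMk n P (X 1)) = Polynomial.aeval (dsMk n P (X 2)) (Polynomial.derivative P) ∧
      ∀ a : DSRing n P, ∃ k : ℕ, 1 ≤ k ∧ (⇑D)^[k] a = 0 := by
  refine ⟨dsDerivation n P, dsDerivation_x n P, dsDerivation_z n P, dsDerivation_y n P,
    fun a => ?_⟩
  obtain ⟨k, hk⟩ := dsDerivation_mem_nilSubalgebra n P a
  exact ⟨k + 1, by omega, by rw [Function.iterate_succ_apply', hk, map_zero]⟩
end
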